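/- arXiv:1802.01365 — 3 statements merged into one kernel-verified Lean document; each statement's English description precedes it below -/
import Mathlib

section
/- Optimality conditions for the KKT reformulation of the learning problem (Lemma 5.1): Assume (B1)–(B4). Let (α*, y*, u*, λ*) be a local solution to the KKT reformulation (LP̄), and assume (y*,u*,λ*) satisfies the second order sufficient optimality conditions of (P_{α*,y_δ}). Then there exists a unique (p*,q*,z*) ∈ Y × U × Z' such that: (i) Σ_{i=1}^r (DΨ_i(u*) q*)(α_i − α*_i) ≥ 0 for all α ∈ [α̲,ᾱ]; (ii) for all v ∈ Y: ⟨p*, v⟩_Ỹ + λ*(∂²_{yy}e(y*,u*)[p*, v]) + λ*(∂²_{yu}e(y*,u*)[q*, v]) + z*(∂_y e(y*,u*) v) = 0; (iii) for all w ∈ U: ⟨u* − u†, w⟩_Ũ + λ*(∂²_{uy}e(y*,u*)[p*, w]) + Σ_i α*_i D²Ψ_i(u*)[q*, w] + λ*(∂²_{uu}e(y*,u*)[q*, w]) + z*(∂_u e(y*,u*) w) = 0; (iv) ∂_y e(y*,u*) p* + ∂_u e(y*,u*) q* = 0 in Z. -/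
open Filter Topology
open scoped RealInnerProductSpace

/-- The Tikhonov functional `J_{α,yδ}` with real-valued penalty functionals. -/
noncomputable def Jr {Y U Ytil : Type*} [NormedAddCommGroup Y] [NormedSpace ℝ Y]
    [NormedAddCommGroup U] [NormedSpace ℝ U]
    [NormedAddCommGroup Ytil] [InnerProductSpace ℝ Ytil]
    {m r : ℕ} (ιY : Y →L[ℝ] Ytil) (Ψ : Fin r → U → ℝ)
    (α : Fin r → ℝ) (yδ : Fin m → Ytil) (p : Y × U) : ℝ :=
  (1 / (2 * (m : ℝ))) * ∑ j, ‖ιY p.1 - yδ j‖ ^ 2 + ∑ i, α i * Ψ i p.2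

/-- `(y,u,λ)` is a KKT point of the lower level problem `(P_{α,yδ})` (case `U_ad = U`):
the adjoint equation, the optimality equation and the state equation hold. -/
def IsKKTPoint {Y U Ytil Z : Type*} [NormedAddCommGroup Y] [NormedSpace ℝ Y]
    [NormedAddCommGroup U] [NormedSpace ℝ U]
    [NormedAddCommGroup Ytil] [InnerProductSpace ℝ Ytil]
    [NormedAddCommGroup Z] [NormedSpace ℝ Z]
    {m r : ℕ} (ιY : Y →L[ℝ] Ytil) (Ψ : Fin r → U → ℝ) (e : Y × U → Z)
    (yδ : Fin m → Ytil) (α : Fin r → ℝ) (y : Y) (u : U) (lam : Z →L[ℝ] ℝ) : Prop :=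
  (∀ v : Y, ⟪ιY y - (m : ℝ)⁻¹ • ∑ j, yδ j, ιY v⟫ + lam (fderiv ℝ e (y, u) (v, 0)) = 0) ∧
  (∀ w : U, (∑ i, α i * fderiv ℝ (Ψ i) u w) + lam (fderiv ℝ e (y, u) (0, w)) = 0) ∧
  e (y, u) = 0

theorem laxMilgram_reflexive {U : Type*} [NormedAddCommGroup U] [NormedSpace ℝ U]
    [CompleteSpace U]
    (hUrefl : Function.Surjective (NormedSpace.inclusionInDoubleDual ℝ U))
    (b : U →L[ℝ] U →L[ℝ] ℝ) {η : ℝ} (hη : 0 < η) (hb : ∀ w, η * ‖w‖ ^ 2 ≤ b w w)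
    (f : U →L[ℝ] ℝ) : ∃ w, b w = f := by
  have hbound : ∀ w, η * ‖w‖ ≤ ‖b w‖ := by
    intro w
    rcases eq_or_ne w 0 with h | h
    · simp [h]
    have h1 : b w w ≤ ‖b w‖ * ‖w‖ := (le_abs_self _).trans ((b w).le_opNorm w)
    have h2 : 0 < ‖w‖ := norm_pos_iff.2 h
    have h3 := hb w
    refine le_of_mul_le_mul_right ?_ h2
    nlinarith
  have hanti : AntilipschitzWith (⟨η⁻¹, by positivity⟩ : NNReal) b := by
    refine ContinuousLinearMap.antilipschitz_of_bound b fun w => ?_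
    have := hbound w
    change ‖w‖ ≤ η⁻¹ * ‖b w‖
    rw [inv_mul_eq_div, le_div_iff₀ hη]
    linarith
  have hcl : IsClosed (Set.range b) := hanti.isClosed_range b.uniformContinuous
  by_contra hf
  have hf' : f ∉ Set.range b := fun ⟨w, hw⟩ => hf ⟨w, hw⟩
  have hconv : Convex ℝ (Set.range b) := by
    have := (LinearMap.range (b : U →ₗ[ℝ] (U →L[ℝ] ℝ))).convex
    exact this
  obtain ⟨g, c, hg1, hg2⟩ := geometric_hahn_banach_point_closed hconv hcl hf'
  obtain ⟨x, hx⟩ := hUrefl g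
  have hgx : ∀ φ : U →L[ℝ] ℝ, g φ = φ x := by
    intro φ; rw [← hx]; rfl
  have hx0 : x = 0 := by
    by_contra hne
    have hpos : 0 < b x x := lt_of_lt_of_le (by positivity) (hb x)
    have := hg2 (b ((c / b x x) • x)) ⟨_, rfl⟩
    rw [hgx] at this
    simp [hpos.ne'] at this
  have h0 := hg2 (b 0) ⟨0, rfl⟩
  rw [hgx] at hg1 h0
  simp [hx0] at hg1 h0
  linarith

/-- Solvability of the saddle point system. -/
theorem saddle_bijective {Y U Z : Type*}
    [NormedAddCommGroup Y] [NormedSpace ℝ Y] [CompleteSpace Y]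
    [NormedAddCommGroup U] [NormedSpace ℝ U] [CompleteSpace U]
    [NormedAddCommGroup Z] [NormedSpace ℝ Z] [CompleteSpace Z]
    (hUrefl : Function.Surjective (NormedSpace.inclusionInDoubleDual ℝ U))
    (A : Y × U →L[ℝ] Z) (hA : Function.Bijective (fun v : Y => A (v, 0)))
    (H : Y × U →L[ℝ] Y × U →L[ℝ] ℝ) {η : ℝ} (hη : 0 < η)
    (hH : ∀ x, A x = 0 → η * ‖x‖ ^ 2 ≤ H x x) :
    (∀ (f : Y × U →L[ℝ] ℝ) (g : Z), ∃ (x : Y × U) (l : Z →L[ℝ] ℝ),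
      H x + l.comp A = f ∧ A x = g) ∧
    (∀ (x : Y × U) (l : Z →L[ℝ] ℝ), H x + l.comp A = 0 → A x = 0 → x = 0 ∧ l = 0) := by
  constructor
  · intro f g
    let A1 : Y →L[ℝ] Z := A.comp (ContinuousLinearMap.inl ℝ Y U)
    let E : Y ≃L[ℝ] Z := ContinuousLinearEquiv.ofBijective A1
      (LinearMap.ker_eq_bot.2 hA.1) (LinearMap.range_eq_top.2 hA.2)
    have hE : ∀ v, E v = A (v, 0) := fun v => rfl
    have hE' : ∀ z, A (E.symm z, 0) = z := fun z => by rw [← hE]; simp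
    let B : U →L[ℝ] Z := A.comp (ContinuousLinearMap.inr ℝ Y U)
    have hAB : ∀ v w, A (v, w) = E v + B w := by
      intro v w
      have : ((v, w) : Y × U) = (v, 0) + (0, w) := by simp
      rw [this, map_add]; rfl
    let S : U →L[ℝ] Y × U :=
      (-((E.symm : Z →L[ℝ] Y).comp B)).prod (ContinuousLinearMap.id ℝ U)
    have hS : ∀ w, S w = (-(E.symm (B w)), w) := fun w => rfl
    have hAS : ∀ w, A (S w) = 0 := by
      intro w
      rw [hS, hAB, map_neg]; simp
    let b : U →L[ℝ] U →L[ℝ] ℝ :=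
      ((ContinuousLinearMap.compL ℝ U (Y × U) ℝ).flip S).comp (H.comp S)
    have hbapp : ∀ w w', b w w' = H (S w) (S w') := fun w w' => rfl
    have hb : ∀ w, η * ‖w‖ ^ 2 ≤ b w w := by
      intro w
      have h1 : ‖w‖ ≤ ‖S w‖ := norm_snd_le (S w)
      refine le_trans ?_ (hH (S w) (hAS w))
      gcongr
    obtain ⟨w, hw⟩ := laxMilgram_reflexive hUrefl b hη hb
      ((f - H (E.symm g, 0)).comp S)
    refine ⟨(E.symm g, 0) + S w,
      (f - H ((E.symm g, 0) + S w)).comp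
        ((ContinuousLinearMap.inl ℝ Y U).comp (E.symm : Z →L[ℝ] Y)), ?_, ?_⟩
    · have hD : ∀ w', (f - H ((E.symm g, 0) + S w)) (S w') = 0 := by
        intro w'
        have := congrArg (fun φ => φ w') hw
        simp only [hbapp, ContinuousLinearMap.comp_apply, sub_apply] at this
        simp only [sub_apply, map_add, add_apply]
        linarith
      refine ContinuousLinearMap.ext fun x => ?_
      obtain ⟨v, w'⟩ := x
      have hdec : ((v, w') : Y × U) = S w' + (E.symm (A (v, w')), 0) := by
        rw [hS, hAB, map_add]; simp
      have h5 : (f - H ((E.symm g, 0) + S w)) (v, w')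
          = (f - H ((E.symm g, 0) + S w)) (E.symm (A (v, w')), 0) := by
        conv_lhs => rw [hdec]
        rw [map_add, hD, zero_add]
      change H ((E.symm g, 0) + S w) (v, w')
        + (f - H ((E.symm g, 0) + S w)) (E.symm (A (v, w')), 0) = f (v, w')
      rw [← h5, sub_apply]
      ring
    · rw [map_add, hAS, hE', add_zero]
  · intro x l h1 h2
    have h3 : H x x = 0 := by
      have := congrArg (fun φ => φ x) h1
      simpa [h2] using this
    have h4 := hH x h2
    have hx : x = 0 := by
      by_contra hne
      have : 0 < η * ‖x‖ ^ 2 := by positivity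
      linarith
    refine ⟨hx, ?_⟩
    ext z
    obtain ⟨v, hv⟩ := hA.2 z
    have := congrArg (fun φ => φ (v, 0)) h1
    simp only [] at hv
    simpa [hx, hv] using this

theorem implicit_curve {E G : Type*}
    [NormedAddCommGroup E] [NormedSpace ℝ E] [CompleteSpace E]
    [NormedAddCommGroup G] [NormedSpace ℝ G] [CompleteSpace G]
    (F : ℝ × E → G) (F' : ℝ × E →L[ℝ] G) (ξ : E)
    (hF : HasStrictFDerivAt F F' (0, ξ)) (h0 : F (0, ξ) = 0)
    (hinj : ∀ x, F' (0, x) = 0 → x = 0) (hsurj : ∀ g, ∃ x, F' (0, x) = g) :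
    ∃ (φ : ℝ → E) (ξ' : E), φ 0 = ξ ∧ HasDerivAt φ ξ' 0 ∧ F' (1, ξ') = 0 ∧
      ∀ᶠ t in 𝓝 (0 : ℝ), F (t, φ t) = 0 := by
  let K : E ≃L[ℝ] G := ContinuousLinearEquiv.ofBijective
    (F'.comp (ContinuousLinearMap.inr ℝ ℝ E))
    (LinearMap.ker_eq_bot'.2 fun x hx => hinj x hx)
    (LinearMap.range_eq_top.2 fun g => hsurj g)
  have hK : (F'.comp (ContinuousLinearMap.inr ℝ ℝ E)).IsInvertible := ⟨K, rfl⟩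
  have hev := hF.eventually_apply_implicitFunctionOfProdDomain hK
  have hd := (hF.hasStrictFDerivAt_implicitFunctionOfProdDomain hK).hasFDerivAt.hasDerivAt
  have hpt := (hF.eventually_apply_eq_iff_implicitFunctionOfProdDomain hK).self_of_nhds.mp rfl
  rw [h0] at hev
  refine ⟨_, _, hpt, hd, ?_, hev⟩
  have hsplit : ∀ x, F' (1, x) = F' (1, 0) + F' (0, x) := by
    intro x; rw [← map_add]; simp
  have hKinv : ∀ g, F' (0, (F'.comp (ContinuousLinearMap.inr ℝ ℝ E)).inverse g) = g := by
    intro g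
    have : (F'.comp (ContinuousLinearMap.inr ℝ ℝ E)).inverse = K.symm :=
      ContinuousLinearMap.inverse_equiv K
    rw [this]
    exact K.apply_symm_apply g
  rw [hsplit]
  have hneg : ∀ x, F' (0, -x) = - F' (0, x) := by
    intro x; rw [← map_neg]; simp
  simp [hneg, hKinv]

/-- The real inner product as a continuous bilinear map. -/
noncomputable def innerR (H : Type*) [NormedAddCommGroup H] [InnerProductSpace ℝ H] :
    H →L[ℝ] H →L[ℝ] ℝ :=
  LinearMap.mkContinuous₂ (innerₗ H) 1 (fun x y => by
    simpa using abs_real_inner_le_norm x y)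

theorem innerR_apply {H : Type*} [NormedAddCommGroup H] [InnerProductSpace ℝ H] (x y : H) :
    innerR H x y = ⟪x, y⟫ := rfl

section Aux

variable {Y U Ytil Z : Type*}
  [NormedAddCommGroup Y] [NormedSpace ℝ Y]
  [NormedAddCommGroup U] [NormedSpace ℝ U]
  [NormedAddCommGroup Ytil] [InnerProductSpace ℝ Ytil]
  [NormedAddCommGroup Z] [NormedSpace ℝ Z]

/-- The part of the Hessian coming from the tracking term. -/
noncomputable def trackH (U : Type*) [NormedAddCommGroup U] [NormedSpace ℝ U]
    (ιY : Y →L[ℝ] Ytil) : Y × U →L[ℝ] Y × U →L[ℝ] ℝ :=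
  ((ContinuousLinearMap.compL ℝ (Y × U) Ytil ℝ).flip
    (ιY.comp (ContinuousLinearMap.fst ℝ Y U))).comp
    ((innerR Ytil).comp (ιY.comp (ContinuousLinearMap.fst ℝ Y U)))

theorem trackH_apply (ιY : Y →L[ℝ] Ytil) (x x' : Y × U) :
    trackH U ιY x x' = ⟪ιY x.1, ιY x'.1⟫ := rfl

/-- The constant part of the gradient coming from the tracking term. -/
noncomputable def trackC (U : Type*) [NormedAddCommGroup U] [NormedSpace ℝ U]
    (ιY : Y →L[ℝ] Ytil) (c : Ytil) : Y × U →L[ℝ] ℝ :=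
  (innerR Ytil c).comp (ιY.comp (ContinuousLinearMap.fst ℝ Y U))

theorem trackC_apply (ιY : Y →L[ℝ] Ytil) (c : Ytil) (x : Y × U) :
    trackC U ιY c x = ⟪c, ιY x.1⟫ := rfl

/-- Gradient of the Lagrangian. -/
noncomputable def gradL {r : ℕ} (ιY : Y →L[ℝ] Ytil) (Ψ : Fin r → U → ℝ) (e : Y × U → Z)
    (c : Ytil) (α : Fin r → ℝ) (x : Y × U) (l : Z →L[ℝ] ℝ) : Y × U →L[ℝ] ℝ :=
  (trackH U ιY x - trackC U ιY c)
    + ∑ i, α i • (fderiv ℝ (Ψ i) x.2).comp (ContinuousLinearMap.snd ℝ Y U)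
    + l.comp (fderiv ℝ e x)

theorem gradL_apply {r : ℕ} (ιY : Y →L[ℝ] Ytil) (Ψ : Fin r → U → ℝ) (e : Y × U → Z)
    (c : Ytil) (α : Fin r → ℝ) (x : Y × U) (l : Z →L[ℝ] ℝ) (δ : Y × U) :
    gradL ιY Ψ e c α x l δ = ⟪ιY x.1 - c, ιY δ.1⟫
      + ∑ i, α i * fderiv ℝ (Ψ i) x.2 δ.2 + l (fderiv ℝ e x δ) := by
  simp [gradL, trackH_apply, trackC_apply, inner_sub_left]

theorem isKKT_of_gradL {m r : ℕ} (ιY : Y →L[ℝ] Ytil) (Ψ : Fin r → U → ℝ) (e : Y × U → Z)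
    (yδ : Fin m → Ytil) (α : Fin r → ℝ) (x : Y × U) (l : Z →L[ℝ] ℝ) :
    IsKKTPoint ιY Ψ e yδ α x.1 x.2 l ↔
      gradL ιY Ψ e ((m : ℝ)⁻¹ • ∑ j, yδ j) α x l = 0 ∧ e x = 0 := by
  constructor
  · rintro ⟨h1, h2, h3⟩
    refine ⟨ContinuousLinearMap.ext fun δ => ?_, h3⟩
    have hδ : δ = (δ.1, 0) + (0, δ.2) := by simp
    rw [gradL_apply]
    conv_lhs => rw [show fderiv ℝ e x δ = fderiv ℝ e x ((δ.1, 0) + (0, δ.2)) by rw [← hδ]]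
    rw [map_add, map_add]
    have h1' := h1 δ.1
    have h2' := h2 δ.2
    simp only [Prod.mk.eta, zero_apply] at *
    linarith
  · rintro ⟨h1, h3⟩
    refine ⟨fun v => ?_, fun w => ?_, h3⟩
    · have := congrArg (fun φ => φ (v, 0)) h1
      simpa [gradL_apply] using this
    · have := congrArg (fun φ => φ (0, w)) h1
      simpa [gradL_apply] using this

/-- Hessian of the Lagrangian. -/
noncomputable def hessL {r : ℕ} (ιY : Y →L[ℝ] Ytil) (Ψ : Fin r → U → ℝ) (e : Y × U → Z)
    (α : Fin r → ℝ) (x : Y × U) (l : Z →L[ℝ] ℝ) : Y × U →L[ℝ] Y × U →L[ℝ] ℝ :=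
  trackH U ιY
    + ∑ i, α i • ((ContinuousLinearMap.compL ℝ (Y × U) U ℝ).flip
        (ContinuousLinearMap.snd ℝ Y U)).comp
          ((fderiv ℝ (fderiv ℝ (Ψ i)) x.2).comp (ContinuousLinearMap.snd ℝ Y U))
    + (ContinuousLinearMap.compL ℝ (Y × U) Z ℝ l).comp (fderiv ℝ (fderiv ℝ e) x)

theorem hessL_apply {r : ℕ} (ιY : Y →L[ℝ] Ytil) (Ψ : Fin r → U → ℝ) (e : Y × U → Z)
    (α : Fin r → ℝ) (x : Y × U) (l : Z →L[ℝ] ℝ) (δ δ' : Y × U) :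
    hessL ιY Ψ e α x l δ δ' = ⟪ιY δ.1, ιY δ'.1⟫
      + ∑ i, α i * fderiv ℝ (fderiv ℝ (Ψ i)) x.2 δ.2 δ'.2
      + l (fderiv ℝ (fderiv ℝ e) x δ δ') := by
  simp [hessL, trackH_apply]

theorem hasStrictFDerivAt_fderiv {E G : Type*} [NormedAddCommGroup E] [NormedSpace ℝ E]
    [NormedAddCommGroup G] [NormedSpace ℝ G] {f : E → G} (hf : ContDiff ℝ 2 f) (x : E) :
    HasStrictFDerivAt (fderiv ℝ f) (fderiv ℝ (fderiv ℝ f) x) x := by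
  have : ContDiff ℝ 1 (fderiv ℝ f) := hf.fderiv_right (by norm_num)
  exact this.contDiffAt.hasStrictFDerivAt (by norm_num)

/-- Strict derivative of the KKT map. -/
theorem kkt_hasStrictFDerivAt {r : ℕ} (ιY : Y →L[ℝ] Ytil) (Ψ : Fin r → U → ℝ) (e : Y × U → Z)
    (hB1 : ContDiff ℝ 2 e) (hB3 : ∀ i, ContDiff ℝ 2 (Ψ i))
    (c : Ytil) (α d : Fin r → ℝ) (x : Y × U) (l : Z →L[ℝ] ℝ) :
    ∃ F' : ℝ × ((Y × U) × (Z →L[ℝ] ℝ)) →L[ℝ] (Y × U →L[ℝ] ℝ) × Z,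
      HasStrictFDerivAt (fun q : ℝ × ((Y × U) × (Z →L[ℝ] ℝ)) =>
        (gradL ιY Ψ e c (α + q.1 • d) q.2.1 q.2.2, e q.2.1)) F' (0, (x, l)) ∧
      ∀ τ δ μ, F' (τ, (δ, μ)) =
        (hessL ιY Ψ e α x l δ
          + τ • ∑ i, d i • (fderiv ℝ (Ψ i) x.2).comp (ContinuousLinearMap.snd ℝ Y U)
          + μ.comp (fderiv ℝ e x), fderiv ℝ e x δ) := by
  let Q := ℝ × ((Y × U) × (Z →L[ℝ] ℝ))
  let q0 : Q := (0, (x, l))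
  have hx : HasStrictFDerivAt (fun q : Q => q.2.1)
      ((ContinuousLinearMap.fst ℝ (Y × U) (Z →L[ℝ] ℝ)).comp
        (ContinuousLinearMap.snd ℝ ℝ ((Y × U) × (Z →L[ℝ] ℝ)))) q0 :=
    ContinuousLinearMap.hasStrictFDerivAt 
      ((ContinuousLinearMap.fst ℝ (Y × U) (Z →L[ℝ] ℝ)).comp
        (ContinuousLinearMap.snd ℝ ℝ ((Y × U) × (Z →L[ℝ] ℝ))))
  have hl : HasStrictFDerivAt (fun q : Q => q.2.2)
      ((ContinuousLinearMap.snd ℝ (Y × U) (Z →L[ℝ] ℝ)).comp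
        (ContinuousLinearMap.snd ℝ ℝ ((Y × U) × (Z →L[ℝ] ℝ)))) q0 :=
    ContinuousLinearMap.hasStrictFDerivAt 
      ((ContinuousLinearMap.snd ℝ (Y × U) (Z →L[ℝ] ℝ)).comp
        (ContinuousLinearMap.snd ℝ ℝ ((Y × U) × (Z →L[ℝ] ℝ))))
  have ht : HasStrictFDerivAt (fun q : Q => q.1)
      (ContinuousLinearMap.fst ℝ ℝ ((Y × U) × (Z →L[ℝ] ℝ))) q0 :=
    hasStrictFDerivAt_fst
  have he : HasStrictFDerivAt e (fderiv ℝ e x) x :=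
    hB1.contDiffAt.hasStrictFDerivAt (by norm_num)
  have he1 : HasStrictFDerivAt (fun q : Q => e q.2.1) _ q0 :=
    HasStrictFDerivAt.comp (f := fun q : Q => q.2.1) q0 he hx
  have he2 : HasStrictFDerivAt (fun q : Q => fderiv ℝ e q.2.1) _ q0 :=
    HasStrictFDerivAt.comp (f := fun q : Q => q.2.1) q0 (hasStrictFDerivAt_fderiv hB1 x) hx
  have h3 := hl.clm_comp he2
  have h1 : HasStrictFDerivAt (fun q : Q => trackH U ιY q.2.1) _ q0 :=
    HasStrictFDerivAt.comp (f := fun q : Q => q.2.1) q0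
      (trackH U ιY).hasStrictFDerivAt hx
  have hxu : HasStrictFDerivAt (fun q : Q => q.2.1.2) _ q0 := hx.snd
  have h2 : ∀ i ∈ Finset.univ, HasStrictFDerivAt (fun q : Q => (α i + q.1 * d i) •
      (fderiv ℝ (Ψ i) q.2.1.2).comp (ContinuousLinearMap.snd ℝ Y U)) _ q0 := fun i _ =>
    ((ht.mul_const (d i)).const_add (α i)).smul
      (((ContinuousLinearMap.compL ℝ (Y × U) U ℝ).flip
        (ContinuousLinearMap.snd ℝ Y U)).hasStrictFDerivAt.comp q0
        (HasStrictFDerivAt.comp (f := fun q : Q => q.2.1.2) q0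
          (hasStrictFDerivAt_fderiv (hB3 i) x.2) hxu))
  have h2s := HasStrictFDerivAt.fun_sum h2
  refine ⟨_, (((h1.sub_const (trackC U ιY c)).add h2s).add h3).prodMk he1, ?_⟩
  intro τ δ μ
  refine Prod.ext ?_ ?_
  · refine ContinuousLinearMap.ext fun δ' => ?_
    simp [hessL_apply, trackH_apply, q0, Finset.mul_sum, Finset.sum_add_distrib]
    simp only [mul_assoc, mul_left_comm (d _) τ]
    ring
  · simp [q0]

/-- Gradient and Hessian of the Lagrangian. -/
theorem fderiv_lagrangian {m r : ℕ} (hm : 0 < m) (ιY : Y →L[ℝ] Ytil) (Ψ : Fin r → U → ℝ)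
    (e : Y × U → Z) (hB1 : ContDiff ℝ 2 e) (hB3 : ∀ i, ContDiff ℝ 2 (Ψ i))
    (yδ : Fin m → Ytil) (α : Fin r → ℝ) (l : Z →L[ℝ] ℝ) (x : Y × U) :
    fderiv ℝ (fun p : Y × U => Jr ιY Ψ α yδ p + l (e p)) x
      = gradL ιY Ψ e ((m : ℝ)⁻¹ • ∑ j, yδ j) α x l := by
  have he : HasFDerivAt e (fderiv ℝ e x) x :=
    (hB1.differentiable (by norm_num) x).hasFDerivAt
  have h3 := l.hasFDerivAt.comp x he
  have hΨ : ∀ i ∈ Finset.univ, HasFDerivAt (fun p : Y × U => α i * Ψ i p.2)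
      (α i • (fderiv ℝ (Ψ i) x.2).comp (ContinuousLinearMap.snd ℝ Y U)) x := fun i _ =>
    (HasFDerivAt.comp (f := fun p : Y × U => p.2) x
      ((hB3 i).differentiable (by norm_num) x.2).hasFDerivAt hasFDerivAt_snd).const_mul (α i)
  have h2 := HasFDerivAt.fun_sum hΨ
  have hι : HasFDerivAt (fun p : Y × U => ιY p.1)
      (ιY.comp (ContinuousLinearMap.fst ℝ Y U)) x :=
    ContinuousLinearMap.hasFDerivAt (ιY.comp (ContinuousLinearMap.fst ℝ Y U))
  have h1 := (HasFDerivAt.fun_sum (u := Finset.univ)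
    (fun j _ => (hι.sub_const (yδ j)).norm_sq)).const_mul (1 / (2 * (m : ℝ)))
  have hm' : (m : ℝ) ≠ 0 := by positivity
  have := ((h1.add h2).add h3).fderiv
  refine Eq.trans this ?_
  refine ContinuousLinearMap.ext fun δ => ?_
  rw [gradL_apply]
  simp [inner_sub_left, inner_smul_left, sum_inner, ← Finset.mul_sum]
  field_simp

theorem fderiv2_lagrangian {m r : ℕ} (hm : 0 < m) (ιY : Y →L[ℝ] Ytil) (Ψ : Fin r → U → ℝ)
    (e : Y × U → Z) (hB1 : ContDiff ℝ 2 e) (hB3 : ∀ i, ContDiff ℝ 2 (Ψ i))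
    (yδ : Fin m → Ytil) (α : Fin r → ℝ) (l : Z →L[ℝ] ℝ) (x : Y × U) :
    fderiv ℝ (fderiv ℝ (fun p : Y × U => Jr ιY Ψ α yδ p + l (e p))) x
      = hessL ιY Ψ e α x l := by
  have h0 : fderiv ℝ (fun p : Y × U => Jr ιY Ψ α yδ p + l (e p))
      = fun x => gradL ιY Ψ e ((m : ℝ)⁻¹ • ∑ j, yδ j) α x l :=
    funext fun x => fderiv_lagrangian hm ιY Ψ e hB1 hB3 yδ α l x
  rw [h0]
  obtain ⟨F', hF, hF'⟩ := kkt_hasStrictFDerivAt ιY Ψ e hB1 hB3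
    ((m : ℝ)⁻¹ • ∑ j, yδ j) α 0 x l
  have hin : HasFDerivAt (fun x : Y × U => ((0 : ℝ), (x, l)))
      ((0 : Y × U →L[ℝ] ℝ).prod ((ContinuousLinearMap.id ℝ (Y × U)).prod 0)) x :=
    (hasFDerivAt_const _ _).prodMk ((hasFDerivAt_id x).prodMk (hasFDerivAt_const _ _))
  have h1 := (HasFDerivAt.comp (f := fun x : Y × U => ((0 : ℝ), (x, l))) x
    hF.hasFDerivAt hin).fst
  simp only [Function.comp_def, smul_zero, add_zero] at h1
  rw [h1.fderiv]
  refine ContinuousLinearMap.ext fun δ => ?_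
  simp [hF']

theorem hessL_symm {r : ℕ} (ιY : Y →L[ℝ] Ytil) (Ψ : Fin r → U → ℝ)
    (e : Y × U → Z) (hB1 : ContDiff ℝ 2 e) (hB3 : ∀ i, ContDiff ℝ 2 (Ψ i))
    (α : Fin r → ℝ) (l : Z →L[ℝ] ℝ) (x δ δ' : Y × U) :
    hessL ιY Ψ e α x l δ δ' = hessL ιY Ψ e α x l δ' δ := by
  have h1 := (hB1.contDiffAt (x := x)).isSymmSndFDerivAt (by simp) δ δ'
  have h2 := fun i => ((hB3 i).contDiffAt (x := x.2)).isSymmSndFDerivAt (by simp) δ.2 δ'.2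
  rw [hessL_apply, hessL_apply, h1, real_inner_comm]
  simp_rw [h2]

end Aux

variable {Y U Util Ytil Z : Type*}
  [NormedAddCommGroup Y] [NormedSpace ℝ Y] [CompleteSpace Y]
  [NormedAddCommGroup U] [NormedSpace ℝ U] [CompleteSpace U]
  [NormedAddCommGroup Util] [InnerProductSpace ℝ Util] [CompleteSpace Util]
  [NormedAddCommGroup Ytil] [InnerProductSpace ℝ Ytil] [CompleteSpace Ytil]
  [NormedAddCommGroup Z] [NormedSpace ℝ Z] [CompleteSpace Z]

/-- **Lemma 5.1** (optimality conditions for the KKT reformulation of the learning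
problem): under (B1)–(B4), if `(α*,y*,u*,λ*)` is a local solution of the KKT
reformulation `(LP̄)` and `(y*,u*,λ*)` satisfies the second order sufficient optimality
conditions of `(P_{α*,yδ})`, then there exists a unique adjoint triple
`(p*,q*,z*) ∈ Y × U × Z'` satisfying the optimality system (i)–(iv). -/
theorem optimality_conditions_KKT_reformulation
    (hYrefl : Function.Surjective (NormedSpace.inclusionInDoubleDual ℝ Y))
    (hUrefl : Function.Surjective (NormedSpace.inclusionInDoubleDual ℝ U))
    {m r : ℕ} (hm : 0 < m) (hr : 0 < r)
    (ιY : Y →L[ℝ] Ytil) (hιY : Function.Injective ιY)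
    (ιU : U →L[ℝ] Util) (hιU : Function.Injective ιU)
    (e : Y × U → Z) (Ψ : Fin r → U → ℝ)
    (hB1 : ContDiff ℝ 2 e) (hB3 : ∀ i, ContDiff ℝ 2 (Ψ i))
    (hB4 : ∀ p : Y × U, Function.Bijective (fun v : Y => fderiv ℝ e p (v, 0)))
    (udag : Util) (yδ : Fin m → Ytil)
    (αlo αhi : Fin r → ℝ) (hαpos : ∀ i, 0 < αlo i) (hαle : ∀ i, αlo i ≤ αhi i)
    (αstar : Fin r → ℝ) (ystar : Y) (ustar : U) (lamstar : Z →L[ℝ] ℝ)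
    -- `(α*,y*,u*,λ*)` is a local solution of the KKT-reformulation (LP̄):
    (hfeas : (∀ i, αlo i ≤ αstar i ∧ αstar i ≤ αhi i) ∧
      IsKKTPoint ιY Ψ e yδ αstar ystar ustar lamstar)
    (hlocmin : ∃ V ∈ 𝓝 ((αstar, ystar, ustar, lamstar) :
        (Fin r → ℝ) × Y × U × (Z →L[ℝ] ℝ)),
      ∀ t ∈ V, (∀ i, αlo i ≤ t.1 i ∧ t.1 i ≤ αhi i) →
        IsKKTPoint ιY Ψ e yδ t.1 t.2.1 t.2.2.1 t.2.2.2 →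
        ‖ιU ustar - udag‖ ^ 2 ≤ ‖ιU t.2.2.1 - udag‖ ^ 2)
    -- second order sufficient optimality conditions for `(P_{α*,yδ})` at `(y*,u*,λ*)`:
    (hsosc : ∃ η > 0, ∀ δ : Y × U, fderiv ℝ e (ystar, ustar) δ = 0 →
      η * ‖δ‖ ^ 2 ≤
        fderiv ℝ (fderiv ℝ (fun p : Y × U => Jr ιY Ψ αstar yδ p + lamstar (e p)))
          (ystar, ustar) δ δ) :
    ∃! pqz : Y × U × (Z →L[ℝ] ℝ),
      -- (i) variational inequality for the parameters
      (∀ α : Fin r → ℝ, (∀ i, αlo i ≤ α i ∧ α i ≤ αhi i) →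
        0 ≤ ∑ i, fderiv ℝ (Ψ i) ustar pqz.2.1 * (α i - αstar i)) ∧
      -- (ii) adjoint state equation
      (∀ v : Y, ⟪ιY pqz.1, ιY v⟫
          + lamstar (fderiv ℝ (fderiv ℝ e) (ystar, ustar) (pqz.1, 0) (v, 0))
          + lamstar (fderiv ℝ (fderiv ℝ e) (ystar, ustar) (0, pqz.2.1) (v, 0))
          + pqz.2.2 (fderiv ℝ e (ystar, ustar) (v, 0)) = 0) ∧
      -- (iii) adjoint control equation
      (∀ w : U, ⟪ιU ustar - udag, ιU w⟫
          + lamstar (fderiv ℝ (fderiv ℝ e) (ystar, ustar) (pqz.1, 0) (0, w))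
          + (∑ i, αstar i * fderiv ℝ (fderiv ℝ (Ψ i)) ustar pqz.2.1 w)
          + lamstar (fderiv ℝ (fderiv ℝ e) (ystar, ustar) (0, pqz.2.1) (0, w))
          + pqz.2.2 (fderiv ℝ e (ystar, ustar) (0, w)) = 0) ∧
      -- (iv) linearized state equation
      fderiv ℝ e (ystar, ustar) (pqz.1, 0)
          + fderiv ℝ e (ystar, ustar) (0, pqz.2.1) = 0 := by
  obtain ⟨η, hη, hco⟩ := hsosc
  obtain ⟨hbox, hkkt⟩ := hfeas
  obtain ⟨V, hV, hmin⟩ := hlocmin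
  simp only [fderiv2_lagrangian hm ιY Ψ e hB1 hB3] at hco
  set H := hessL ιY Ψ e αstar (ystar, ustar) lamstar with hHdef
  set A := fderiv ℝ e (ystar, ustar) with hAdef
  obtain ⟨hex, huniq⟩ := saddle_bijective hUrefl A (hB4 (ystar, ustar)) H hη hco
  -- the right hand side functional
  let f : Y × U →L[ℝ] ℝ :=
    (innerR Util (ιU ustar - udag)).comp (ιU.comp (ContinuousLinearMap.snd ℝ Y U))
  have hf : ∀ δ : Y × U, f δ = ⟪ιU ustar - udag, ιU δ.2⟫ := fun δ => rfl
  have hAsplit : ∀ p q, A (p, q) = A (p, 0) + A (0, q) := by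
    intro p q; rw [← map_add]; simp
  -- equivalence of (ii)-(iv) with the saddle point system
  have hiff : ∀ (p : Y) (q : U) (z : Z →L[ℝ] ℝ),
      ((∀ v : Y, ⟪ιY p, ιY v⟫
          + lamstar (fderiv ℝ (fderiv ℝ e) (ystar, ustar) (p, 0) (v, 0))
          + lamstar (fderiv ℝ (fderiv ℝ e) (ystar, ustar) (0, q) (v, 0))
          + z (A (v, 0)) = 0) ∧
      (∀ w : U, ⟪ιU ustar - udag, ιU w⟫
          + lamstar (fderiv ℝ (fderiv ℝ e) (ystar, ustar) (p, 0) (0, w))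
          + (∑ i, αstar i * fderiv ℝ (fderiv ℝ (Ψ i)) ustar q w)
          + lamstar (fderiv ℝ (fderiv ℝ e) (ystar, ustar) (0, q) (0, w))
          + z (A (0, w)) = 0) ∧
      A (p, 0) + A (0, q) = 0) ↔ (H (p, q) + z.comp A = -f ∧ A (p, q) = 0) := by
    intro p q z
    have hE2 : ∀ δ, fderiv ℝ (fderiv ℝ e) (ystar, ustar) (p, q) δ
        = fderiv ℝ (fderiv ℝ e) (ystar, ustar) (p, 0) δ
          + fderiv ℝ (fderiv ℝ e) (ystar, ustar) (0, q) δ := by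
      intro δ
      rw [← add_apply, ← map_add]; simp
    rw [← hAsplit]
    constructor
    · rintro ⟨h1, h2, h3⟩
      refine ⟨ContinuousLinearMap.ext fun δ => ?_, h3⟩
      obtain ⟨v, w⟩ := δ
      have hδ : ((v, w) : Y × U) = (v, 0) + (0, w) := by simp
      have h1' := h1 v
      have h2' := h2 w
      rw [hδ, map_add, map_add]
      simp only [add_apply, neg_apply, ContinuousLinearMap.comp_apply, hHdef, hessL_apply, hE2,
        hf, map_add, map_zero, inner_zero_right, mul_zero, Finset.sum_const_zero]
      linarith
    · rintro ⟨h1, h3⟩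
      refine ⟨fun v => ?_, fun w => ?_, h3⟩
      · have := congrArg (fun φ => φ (v, 0)) h1
        simp only [add_apply, neg_apply, ContinuousLinearMap.comp_apply, hHdef, hessL_apply, hE2,
          hf, map_add, map_zero, inner_zero_right, mul_zero, Finset.sum_const_zero] at this
        linarith
      · have := congrArg (fun φ => φ (0, w)) h1
        simp only [add_apply, neg_apply, ContinuousLinearMap.comp_apply, hHdef, hessL_apply, hE2,
          hf, map_add, map_zero, inner_zero_right, mul_zero, Finset.sum_const_zero] at this
        linarith
  obtain ⟨⟨p, q⟩, z, hpq1, hpq2⟩ := hex (-f) 0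
  refine ⟨(p, q, z), ⟨?_, (hiff p q z).2 ⟨hpq1, hpq2⟩⟩, ?_⟩
  · -- variational inequality
    intro α hα
    obtain ⟨F', hF, hF'⟩ := kkt_hasStrictFDerivAt ιY Ψ e hB1 hB3
      ((m : ℝ)⁻¹ • ∑ j, yδ j) αstar (α - αstar) (ystar, ustar) lamstar
    have hk := (isKKT_of_gradL ιY Ψ e yδ αstar (ystar, ustar) lamstar).1 hkkt
    obtain ⟨φ, ξ', hφ0, hφ, hξ, hev⟩ := implicit_curve _ F' ((ystar, ustar), lamstar) hF
      (by simp [hk.1, hk.2])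
      (by
        rintro ⟨δ, μ⟩ h
        rw [hF'] at h
        obtain ⟨h1, h2⟩ := Prod.mk.inj h
        obtain ⟨h3, h4⟩ := huniq δ μ (by simpa using h1) h2
        rw [h3, h4]; rfl)
      (by
        rintro ⟨g1, g2⟩
        obtain ⟨x, l, h1, h2⟩ := hex g1 g2
        refine ⟨(x, l), ?_⟩
        rw [hF', zero_smul, add_zero]
        exact Prod.ext h1 h2)
    obtain ⟨δ, μ⟩ := ξ'
    rw [hF'] at hξ
    obtain ⟨hξ1, hξ2⟩ := Prod.mk.inj hξ
    -- the objective along the curve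
    have hdu : HasDerivAt (fun t => ιU (φ t).1.2 - udag) (ιU δ.2) 0 := by
      have h1 : HasDerivAt (fun t => (φ t).1.2) δ.2 0 := hφ.fst.snd
      exact (ιU.hasFDerivAt.comp_hasDerivAt (0 : ℝ) h1).sub_const udag
    have hobj := hdu.norm_sq
    have hnear : ∀ᶠ t in 𝓝 (0 : ℝ),
        ((αstar + t • (α - αstar), (φ t).1.1, (φ t).1.2, (φ t).2) :
          (Fin r → ℝ) × Y × U × (Z →L[ℝ] ℝ)) ∈ V := by
      have hc := hφ.continuousAt
      have hc' : ContinuousAt (fun t : ℝ =>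
          ((αstar + t • (α - αstar), (φ t).1.1, (φ t).1.2, (φ t).2) :
          (Fin r → ℝ) × Y × U × (Z →L[ℝ] ℝ))) 0 := by fun_prop
      refine hc' ?_
      simpa [hφ0] using hV
    have hge : ∀ᶠ t in 𝓝[>] (0 : ℝ),
        ‖ιU (φ 0).1.2 - udag‖ ^ 2 ≤ ‖ιU (φ t).1.2 - udag‖ ^ 2 := by
      have hlt : ∀ᶠ t in 𝓝[>] (0 : ℝ), t < 1 :=
        (eventually_lt_nhds one_pos).filter_mono nhdsWithin_le_nhds
      filter_upwards [hnear.filter_mono nhdsWithin_le_nhds, hev.filter_mono nhdsWithin_le_nhds,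
        self_mem_nhdsWithin, hlt] with t h1 h2 h3 h4
      have h3' : 0 < t := h3
      rw [hφ0]
      refine hmin _ h1 ?_ ?_
      · intro i
        have ha := hα i
        have hb := hbox i
        simp only [Pi.add_apply, Pi.smul_apply, Pi.sub_apply, smul_eq_mul]
        constructor <;> nlinarith
      · obtain ⟨h5, h6⟩ := Prod.mk.inj h2
        exact (isKKT_of_gradL ιY Ψ e yδ _ (φ t).1 (φ t).2).2 ⟨h5, h6⟩
    have hder : 0 ≤ 2 * ⟪ιU (φ 0).1.2 - udag, ιU δ.2⟫ := by
      have hs := hobj.hasDerivWithinAt (s := Set.Ioi 0)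
      rw [hasDerivWithinAt_iff_tendsto_slope' (by simp)] at hs
      refine ge_of_tendsto hs ?_
      filter_upwards [hge, self_mem_nhdsWithin] with t h1 h2
      have h2' : 0 < t := h2
      rw [slope_def_field]
      exact div_nonneg (sub_nonneg.2 h1) (by linarith)
    rw [hφ0] at hder
    have e1 := congrArg (fun φ => φ δ) hpq1
    have e2 := congrArg (fun φ => φ (p, q)) hξ1
    have e3 := hessL_symm ιY Ψ e hB1 hB3 αstar lamstar (ystar, ustar) (p, q) δ
    rw [← hHdef] at e3
    rw [← hAdef] at hξ2
    simp only [add_apply, neg_apply, ContinuousLinearMap.comp_apply, hf, hξ2, map_zero,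
      add_zero] at e1
    simp [← hHdef, ← hAdef, hpq2] at e2
    have e4 : ∑ i, fderiv ℝ (Ψ i) ustar q * (α i - αstar i)
        = ∑ i, (α i - αstar i) * fderiv ℝ (Ψ i) ustar q :=
      Finset.sum_congr rfl fun i _ => mul_comm _ _
    change 0 ≤ ∑ i, fderiv ℝ (Ψ i) ustar q * (α i - αstar i)
    rw [e4]
    simp only [] at hder
    linarith
  · rintro ⟨p', q', z'⟩ ⟨-, h⟩
    obtain ⟨h1, h2⟩ := (hiff p' q' z').1 h
    obtain ⟨h3, h4⟩ := huniq ((p', q') - (p, q)) (z' - z)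
      (by
        rw [map_sub, ContinuousLinearMap.sub_comp]
        have : H (p', q') - H (p, q) + (z'.comp A - z.comp A)
          = (H (p', q') + z'.comp A) - (H (p, q) + z.comp A) := by abel
        rw [this, h1, hpq1, sub_self])
      (by rw [map_sub, h2, hpq2, sub_self])
    obtain ⟨h5, h6⟩ := Prod.mk.inj (sub_eq_zero.1 h3)
    rw [h5, h6, sub_eq_zero.1 h4]
end

section
/- Solutions of the learning problem are local solutions of the KKT reformulation (Theorem 5.1): Assume (B1)–(B4) and that (P_{α,y_δ}) admits a solution for every α ∈ [α̲,ᾱ]. Let (α*,y*,u*) be a solution of the learning problem (LP), and assume: (i) (P_{α*,y_δ}) is stable with respect to the regularization parameters, i.e. for every sequence αⁿ → α* in [α̲,ᾱ], every sequence (yⁿ,uⁿ) of solutions to (P_{αⁿ,y_δ}) has a strong cluster point in Y × U and every strong cluster point solves (P_{α*,y_δ}); (ii) (y*,u*) satisfies the second order sufficient optimality conditions of (P_{α*,y_δ}); (iii) (y*,u*) is the unique solution of (P_{α*,y_δ}). Then there exists a unique λ* ∈ Z' such that (α*,y*,u*,λ*) is a local solution of the KKT reformulation (LP̄). -/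
open Filter Topology
open scoped RealInnerProductSpace

lemma aux_coercive {X Z : Type*} [NormedAddCommGroup X] [NormedSpace ℝ X]
    [NormedAddCommGroup Z] [NormedSpace ℝ Z]
    (H : X →L[ℝ] X →L[ℝ] ℝ) (A : X →L[ℝ] Z) (R : Z →L[ℝ] X) (hR : ∀ z, A (R z) = z)
    (η : ℝ) (hη : 0 < η) (hH : ∀ δ, A δ = 0 → η * ‖δ‖ ^ 2 ≤ H δ δ) :
    ∃ ε > 0, ∀ d, ‖A d‖ ≤ ε * ‖d‖ → η / 2 * ‖d‖ ^ 2 ≤ H d d := by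
  set M := ‖H‖ with hM
  have hM0 : 0 ≤ M := norm_nonneg H
  set C := ‖R‖ with hC
  have hC0 : 0 ≤ C := norm_nonneg R
  -- choose s with η(1-2s) - M(2 s (1+s) + s²) ≥ η/2
  set s : ℝ := η / (4 * η + 10 * M) with hs
  have hden : 0 < 4 * η + 10 * M := by positivity
  have hs0 : 0 < s := by positivity
  have hsM : s * (4 * η + 10 * M) = η := by rw [hs]; field_simp
  have hs1 : s ≤ 1 := by nlinarith [mul_nonneg hs0.le hM0]
  refine ⟨s / (C + 1), by positivity, fun d hd => ?_⟩
  set v := R (A d) with hv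
  have hvn : ‖v‖ ≤ s * ‖d‖ := by
    calc ‖v‖ ≤ C * ‖A d‖ := R.le_opNorm _
      _ ≤ C * (s / (C + 1) * ‖d‖) := by gcongr
      _ = (C / (C + 1)) * (s * ‖d‖) := by ring
      _ ≤ 1 * (s * ‖d‖) := by
        gcongr
        rw [div_le_one (by positivity)]; linarith
      _ = _ := one_mul _
  have hk : A (d - v) = 0 := by rw [map_sub, hv, hR, sub_self]
  have h1 := hH _ hk
  have hkn : (1 - s) * ‖d‖ ≤ ‖d - v‖ := by
    have := norm_sub_norm_le d v
    linarith
  have hkn2 : ‖d - v‖ ≤ (1 + s) * ‖d‖ := by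
    have := norm_sub_le d v
    linarith
  have hb : ∀ x y, -(M * ‖x‖ * ‖y‖) ≤ H x y := fun x y => by
    have := H.le_opNorm₂ x y
    exact (abs_le.mp this).1
  have e1 : H d d = H (d - v) (d - v) + H (d - v) v + H v (d - v) + H v v := by
    simp only [map_sub, sub_apply]; ring
  have b1 := hb (d - v) v
  have b2 := hb v (d - v)
  have b3 := hb v v
  have hd0 := norm_nonneg d
  have hv0 := norm_nonneg v
  have hk0 := norm_nonneg (d - v)
  have c1 : M * ‖d - v‖ * ‖v‖ ≤ M * ((1 + s) * ‖d‖) * (s * ‖d‖) := by gcongr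
  have c2 : M * ‖v‖ * ‖v‖ ≤ M * (s * ‖d‖) * (s * ‖d‖) := by gcongr
  have c3 : ((1 - s) * ‖d‖) ^ 2 ≤ ‖d - v‖ ^ 2 := by
    have : 0 ≤ (1 - s) * ‖d‖ := mul_nonneg (by linarith) hd0
    gcongr
  have c4 : η * ((1 - s) * ‖d‖) ^ 2 ≤ η * ‖d - v‖ ^ 2 := by gcongr
  have key : η / 2 ≤ η * (1 - s) ^ 2 - 2 * M * (1 + s) * s - M * s * s := by
    have : M * s * s ≤ M * s := by
      have : M * s * s ≤ M * s * 1 := by gcongr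
      linarith
    nlinarith [mul_nonneg hη.le (sq_nonneg s)]
  have key2 := mul_le_mul_of_nonneg_right key (sq_nonneg ‖d‖)
  nlinarith

lemma aux_unique {P X Z : Type*} [NormedAddCommGroup P] [NormedSpace ℝ P]
    [NormedAddCommGroup X] [NormedSpace ℝ X]
    [NormedAddCommGroup Z] [NormedSpace ℝ Z]
    (Φ : P → X → ℝ) (G : P × X → (X →L[ℝ] ℝ)) (G' : P × X →L[ℝ] (X →L[ℝ] ℝ))
    (hΦ : ∀ a x, HasFDerivAt (Φ a) (G (a, x)) x)
    (a0 : P) (x0 : X) (hG : HasStrictFDerivAt G G' (a0, x0))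
    (e : X → Z) (A : X →L[ℝ] Z) (he : HasStrictFDerivAt e A x0)
    (R : Z →L[ℝ] X) (hR : ∀ z, A (R z) = z)
    (η : ℝ) (hη : 0 < η) (hH : ∀ δ, A δ = 0 → η * ‖δ‖ ^ 2 ≤ G' (0, δ) δ) :
    ∃ ρ > 0, ∀ a ∈ Metric.ball a0 ρ, ∀ x ∈ Metric.ball x0 ρ, ∀ x' ∈ Metric.ball x0 ρ,
      e x = 0 → e x' = 0 → G (a, x) = 0 → Φ a x' ≤ Φ a x → x' = x := by
  obtain ⟨ε, hε, hco⟩ := aux_coercive (G'.comp (ContinuousLinearMap.inr ℝ P X)) A R hR η hη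
    (by simpa using hH)
  have h1 := he.isLittleO.def hε
  have h2 := hG.isLittleO.def (show (0:ℝ) < η / 4 by positivity)
  obtain ⟨ρ1, hρ1, H1⟩ := Metric.eventually_nhds_iff_ball.mp h1
  obtain ⟨ρ2, hρ2, H2⟩ := Metric.eventually_nhds_iff_ball.mp h2
  refine ⟨min ρ1 ρ2, lt_min hρ1 hρ2, fun a ha x hx x' hx' hex hex' hGx hle => ?_⟩
  by_contra hne
  set d := x' - x with hd
  have hd0 : 0 < ‖d‖ := by
    rw [hd, norm_pos_iff, sub_ne_zero]; exact hne
  have hAd : ‖A d‖ ≤ ε * ‖d‖ := by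
    have := H1 (x', x) (by
      rw [← ball_prod_same]
      exact ⟨Metric.ball_subset_ball (min_le_left _ _) hx',
        Metric.ball_subset_ball (min_le_left _ _) hx⟩)
    simpa [hex, hex', hd, norm_sub_rev (A x) (A x')] using this
  have hq := hco d hAd
  simp only [ContinuousLinearMap.comp_apply, ContinuousLinearMap.inr_apply] at hq
  have hpos : ∀ t ∈ Set.Ioo (0:ℝ) 1, 0 < G (a, x + t • d) d := by
    intro t ht
    have hmem : x + t • d ∈ Metric.ball x0 (min ρ1 ρ2) :=
      (convex_ball x0 _).add_smul_sub_mem hx hx' ⟨ht.1.le, ht.2.le⟩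
    have := H2 ((a, x + t • d), (a, x)) (by
      rw [← ball_prod_same, ← ball_prod_same]
      have s := Metric.ball_subset_ball (min_le_right ρ1 ρ2) (x := a0)
      have s' := Metric.ball_subset_ball (min_le_right ρ1 ρ2) (x := x0)
      exact ⟨⟨s ha, s' hmem⟩, ⟨s ha, s' hx⟩⟩)
    have e0 : ((a, x + t • d) : P × X) - (a, x) = (0, t • d) := by ext <;> simp
    simp only [hGx, e0, sub_zero] at this
    rw [show ((0:P), t • d) = t • ((0:P), d) by simp, map_smul] at this
    have hn : ‖t • ((0:P), d)‖ = t * ‖d‖ := by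
      rw [norm_smul, Real.norm_of_nonneg ht.1.le, Prod.norm_mk]; simp
    rw [hn] at this
    have h3 := ContinuousLinearMap.le_of_opNorm_le _ this d
    rw [Real.norm_eq_abs] at h3
    have h4 := (abs_le.mp h3).1
    simp only [sub_apply, smul_apply, smul_eq_mul] at h4
    have h5 := mul_le_mul_of_nonneg_left hq ht.1.le
    have h6 : 0 < η * t * ‖d‖ ^ 2 := by have := ht.1; positivity
    nlinarith
  have hder : ∀ t : ℝ, HasDerivAt (fun t : ℝ => Φ a (x + t • d)) (G (a, x + t • d) d) t := by
    intro t
    have hl : HasDerivAt (fun t : ℝ => x + t • d) d t := by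
      simpa using ((hasDerivAt_id t).smul_const d).const_add x
    exact (hΦ a (x + t • d)).comp_hasDerivAt t hl
  have hmono : StrictMonoOn (fun t : ℝ => Φ a (x + t • d)) (Set.Icc 0 1) := by
    apply strictMonoOn_of_deriv_pos (convex_Icc 0 1)
    · exact fun t _ => (hder t).continuousAt.continuousWithinAt
    · intro t ht
      rw [interior_Icc] at ht
      rw [(hder t).deriv]; exact hpos t ht
  have := hmono (by simp) (by simp) (zero_lt_one)
  simp [hd] at this
  linarith

/-- Explicit derivative of the Lagrangian, as a function of parameters and point. -/
noncomputable def auxG {Y U Ytil Z : Type*} [NormedAddCommGroup Y] [NormedSpace ℝ Y]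
    [NormedAddCommGroup U] [NormedSpace ℝ U]
    [NormedAddCommGroup Ytil] [InnerProductSpace ℝ Ytil]
    [NormedAddCommGroup Z] [NormedSpace ℝ Z]
    {m r : ℕ} (ιY : Y →L[ℝ] Ytil) (Ψ : Fin r → U → ℝ) (e : Y × U → Z)
    (yδ : Fin m → Ytil) (t : ((Fin r → ℝ) × (Z →L[ℝ] ℝ)) × (Y × U)) : (Y × U) →L[ℝ] ℝ :=
  ((innerSL ℝ (ιY t.2.1 - (m : ℝ)⁻¹ • ∑ j, yδ j)).comp ιY).comp (ContinuousLinearMap.fst ℝ Y U)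
    + (∑ i, t.1.1 i • (fderiv ℝ (Ψ i) t.2.2).comp (ContinuousLinearMap.snd ℝ Y U))
    + t.1.2.comp (fderiv ℝ e t.2)

lemma auxG_contDiff {Y U Ytil Z : Type*} [NormedAddCommGroup Y] [NormedSpace ℝ Y]
    [NormedAddCommGroup U] [NormedSpace ℝ U]
    [NormedAddCommGroup Ytil] [InnerProductSpace ℝ Ytil]
    [NormedAddCommGroup Z] [NormedSpace ℝ Z]
    {m r : ℕ} (ιY : Y →L[ℝ] Ytil) (Ψ : Fin r → U → ℝ) (e : Y × U → Z)
    (yδ : Fin m → Ytil) (hB1 : ContDiff ℝ 2 e) (hB3 : ∀ i, ContDiff ℝ 2 (Ψ i)) :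
    ContDiff ℝ 1 (auxG ιY Ψ e yδ) := by
  have h1 : ContDiff ℝ 1 (fderiv ℝ e) := hB1.fderiv_right (by norm_num)
  have h3 : ∀ i, ContDiff ℝ 1 (fderiv ℝ (Ψ i)) := fun i => (hB3 i).fderiv_right (by norm_num)
  unfold auxG
  refine (ContDiff.add ?_ ?_).add ?_
  · refine ContDiff.clm_comp (ContDiff.clm_comp ?_ contDiff_const) contDiff_const
    have hin : ContDiff ℝ 1 (fun t : ((Fin r → ℝ) × (Z →L[ℝ] ℝ)) × (Y × U) =>
        ιY t.2.1 - (m : ℝ)⁻¹ • ∑ j, yδ j) := by fun_prop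
    exact (ContinuousLinearMap.contDiff (innerSL ℝ (E := Ytil))).comp hin
  · refine ContDiff.sum fun i _ => ContDiff.fun_smul ?_ ?_
    · exact (contDiff_apply ℝ ℝ i).comp (contDiff_fst.comp contDiff_fst)
    exact ContDiff.clm_comp ((h3 i).comp (by fun_prop)) contDiff_const
  · exact ContDiff.clm_comp (by fun_prop) (h1.comp (by fun_prop))

lemma auxG_hasFDerivAt {Y U Ytil Z : Type*} [NormedAddCommGroup Y] [NormedSpace ℝ Y]
    [NormedAddCommGroup U] [NormedSpace ℝ U]
    [NormedAddCommGroup Ytil] [InnerProductSpace ℝ Ytil]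
    [NormedAddCommGroup Z] [NormedSpace ℝ Z]
    {m r : ℕ} (hm : 0 < m) (ιY : Y →L[ℝ] Ytil) (Ψ : Fin r → U → ℝ) (e : Y × U → Z)
    (yδ : Fin m → Ytil) (hB1 : ContDiff ℝ 2 e) (hB3 : ∀ i, ContDiff ℝ 2 (Ψ i))
    (a : (Fin r → ℝ) × (Z →L[ℝ] ℝ)) (x : Y × U) :
    HasFDerivAt (fun p : Y × U => Jr ιY Ψ a.1 yδ p + a.2 (e p)) (auxG ιY Ψ e yδ (a, x)) x := by
  have hm' : (m : ℝ) ≠ 0 := by positivity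
  have h1 : HasFDerivAt e (fderiv ℝ e x) x := (hB1.differentiable (by norm_num) x).hasFDerivAt
  have h3 : ∀ i, HasFDerivAt (fun p : Y × U => Ψ i p.2)
      ((fderiv ℝ (Ψ i) x.2).comp (ContinuousLinearMap.snd ℝ Y U)) x := fun i =>
    ((hB3 i).differentiable (by norm_num) x.2).hasFDerivAt.comp x hasFDerivAt_snd
  have h4 : ∀ j, HasFDerivAt (fun p : Y × U => ‖ιY p.1 - yδ j‖ ^ 2) _ x := fun j =>
    (((ιY.comp (ContinuousLinearMap.fst ℝ Y U)).hasFDerivAt (x := x)).sub_const (yδ j)).norm_sq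
  have h5 := ((HasFDerivAt.fun_sum (u := Finset.univ) fun j _ => h4 j).const_mul
    (1 / (2 * (m : ℝ)))).add
    (HasFDerivAt.fun_sum (u := Finset.univ) fun i _ => (h3 i).const_mul (a.1 i))
  have h6 := h5.add (a.2.hasFDerivAt.comp x h1)
  refine (h6.congr_fderiv ?_).congr_of_eventuallyEq (Eventually.of_forall fun p => ?_)
  · unfold auxG
    congr 2
    ext p <;>
    · simp [Finset.sum_sub_distrib, inner_sub_left, inner_smul_left, sum_inner]
      try simp only [← Finset.mul_sum, Finset.sum_sub_distrib]
      try simp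
      try field_simp
  · simp [Jr]

variable {Y U Util Ytil Z : Type*}
  [NormedAddCommGroup Y] [NormedSpace ℝ Y] [CompleteSpace Y]
  [NormedAddCommGroup U] [NormedSpace ℝ U] [CompleteSpace U]
  [NormedAddCommGroup Util] [InnerProductSpace ℝ Util] [CompleteSpace Util]
  [NormedAddCommGroup Ytil] [InnerProductSpace ℝ Ytil] [CompleteSpace Ytil]
  [NormedAddCommGroup Z] [NormedSpace ℝ Z] [CompleteSpace Z]

/-- **Theorem 5.1** (solutions of the learning problem are local solutions of the KKT
reformulation): under (B1)–(B4) and solvability of the lower level problems, if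
`(α*,y*,u*)` solves the learning problem `(LP)`, `(P_{α*,yδ})` is stable with respect
to the regularization parameters, `(y*,u*)` satisfies the second order sufficient
optimality conditions of `(P_{α*,yδ})` and is the unique solution of `(P_{α*,yδ})`,
then there is a unique `λ* ∈ Z'` making `(α*,y*,u*,λ*)` a local solution of `(LP̄)`. -/
theorem learning_solution_is_local_KKT_solution
    (hYrefl : Function.Surjective (NormedSpace.inclusionInDoubleDual ℝ Y))
    (hUrefl : Function.Surjective (NormedSpace.inclusionInDoubleDual ℝ U))
    {m r : ℕ} (hm : 0 < m) (hr : 0 < r)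
    (ιY : Y →L[ℝ] Ytil) (hιY : Function.Injective ιY)
    (ιU : U →L[ℝ] Util) (hιU : Function.Injective ιU)
    (e : Y × U → Z) (Ψ : Fin r → U → ℝ)
    (hB1 : ContDiff ℝ 2 e) (hB3 : ∀ i, ContDiff ℝ 2 (Ψ i))
    (hB4 : ∀ p : Y × U, Function.Bijective (fun v : Y => fderiv ℝ e p (v, 0)))
    (udag : Util) (yδ : Fin m → Ytil)
    (αlo αhi : Fin r → ℝ) (hαpos : ∀ i, 0 < αlo i) (hαle : ∀ i, αlo i ≤ αhi i)
    -- the lower level problem admits a solution for every admissible α: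
    (hsolvable : ∀ α : Fin r → ℝ, (∀ i, αlo i ≤ α i ∧ α i ≤ αhi i) →
      ∃ p : Y × U, e p = 0 ∧ ∀ q : Y × U, e q = 0 → Jr ιY Ψ α yδ p ≤ Jr ιY Ψ α yδ q)
    (αstar : Fin r → ℝ) (ystar : Y) (ustar : U)
    -- `(α*,y*,u*)` is a solution of the learning problem (LP):
    (hαstar : ∀ i, αlo i ≤ αstar i ∧ αstar i ≤ αhi i)
    (hsol : e (ystar, ustar) = 0 ∧
      ∀ q : Y × U, e q = 0 → Jr ιY Ψ αstar yδ (ystar, ustar) ≤ Jr ιY Ψ αstar yδ q)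
    (hLPopt : ∀ α : Fin r → ℝ, (∀ i, αlo i ≤ α i ∧ α i ≤ αhi i) →
      ∀ q : Y × U, (e q = 0 ∧ ∀ q' : Y × U, e q' = 0 → Jr ιY Ψ α yδ q ≤ Jr ιY Ψ α yδ q') →
        ‖ιU ustar - udag‖ ^ 2 ≤ ‖ιU q.2 - udag‖ ^ 2)
    -- (i) stability of `(P_{α*,yδ})` with respect to the regularization parameters:
    (hstable : ∀ αseq : ℕ → Fin r → ℝ,
      (∀ n i, αlo i ≤ αseq n i ∧ αseq n i ≤ αhi i) →
      (∀ i, Tendsto (fun n => αseq n i) atTop (𝓝 (αstar i))) →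
      ∀ (y : ℕ → Y) (u : ℕ → U),
        (∀ n, e (y n, u n) = 0 ∧
          ∀ q : Y × U, e q = 0 → Jr ιY Ψ (αseq n) yδ (y n, u n) ≤ Jr ιY Ψ (αseq n) yδ q) →
        (∃ p : Y × U, MapClusterPt p atTop (fun n => (y n, u n))) ∧
        ∀ p : Y × U, MapClusterPt p atTop (fun n => (y n, u n)) →
          (e p = 0 ∧ ∀ q : Y × U, e q = 0 → Jr ιY Ψ αstar yδ p ≤ Jr ιY Ψ αstar yδ q))
    -- (ii) second order sufficient optimality conditions at `(y*,u*)`: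
    (hsosc : ∃ lam : Z →L[ℝ] ℝ, IsKKTPoint ιY Ψ e yδ αstar ystar ustar lam ∧
      ∃ η > 0, ∀ δ : Y × U, fderiv ℝ e (ystar, ustar) δ = 0 →
        η * ‖δ‖ ^ 2 ≤
          fderiv ℝ (fderiv ℝ (fun p : Y × U => Jr ιY Ψ αstar yδ p + lam (e p)))
            (ystar, ustar) δ δ)
    -- (iii) uniqueness of the solution of `(P_{α*,yδ})`:
    (huniq : ∀ q : Y × U,
      (e q = 0 ∧ ∀ q' : Y × U, e q' = 0 → Jr ιY Ψ αstar yδ q ≤ Jr ιY Ψ αstar yδ q') →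
      q = (ystar, ustar)) :
    ∃! lamstar : Z →L[ℝ] ℝ,
      IsKKTPoint ιY Ψ e yδ αstar ystar ustar lamstar ∧
      ∃ V ∈ 𝓝 ((αstar, ystar, ustar, lamstar) : (Fin r → ℝ) × Y × U × (Z →L[ℝ] ℝ)),
        ∀ t ∈ V, (∀ i, αlo i ≤ t.1 i ∧ t.1 i ≤ αhi i) →
          IsKKTPoint ιY Ψ e yδ t.1 t.2.1 t.2.2.1 t.2.2.2 →
          ‖ιU ustar - udag‖ ^ 2 ≤ ‖ιU t.2.2.1 - udag‖ ^ 2 := by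
  obtain ⟨lam, hkkt, η, hη, hH⟩ := hsosc
  have huniqlam : ∀ l : Z →L[ℝ] ℝ, IsKKTPoint ιY Ψ e yδ αstar ystar ustar l → l = lam := by
    intro l hl
    ext z
    obtain ⟨v, hv⟩ := (hB4 (ystar, ustar)).2 z
    have h1 := hl.1 v
    have h2 := hkkt.1 v
    simp only at hv
    rw [hv] at h1 h2
    linarith
  refine ⟨lam, ⟨hkkt, ?_⟩, fun l hl => huniqlam l hl.1⟩
  -- right inverse of the linearized state equation
  set A := fderiv ℝ e (ystar, ustar) with hA
  let Ay : Y →L[ℝ] Z := A.comp (ContinuousLinearMap.inl ℝ Y U)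
  have hbij : Function.Bijective Ay := hB4 (ystar, ustar)
  let E : Y ≃L[ℝ] Z := ContinuousLinearEquiv.ofBijective Ay
    (LinearMap.ker_eq_bot.mpr hbij.1) (LinearMap.range_eq_top.mpr hbij.2)
  let R : Z →L[ℝ] Y × U := (ContinuousLinearMap.inl ℝ Y U).comp (E.symm : Z →L[ℝ] Y)
  have hR : ∀ z, A (R z) = z := fun z => E.apply_symm_apply z
  have hcd := auxG_contDiff ιY Ψ e yδ hB1 hB3
  have hG : HasStrictFDerivAt (auxG ιY Ψ e yδ)
      (fderiv ℝ (auxG ιY Ψ e yδ) ((αstar, lam), (ystar, ustar))) ((αstar, lam), (ystar, ustar)) :=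
    hcd.contDiffAt.hasStrictFDerivAt (by norm_num)
  have he : HasStrictFDerivAt e A (ystar, ustar) :=
    hB1.contDiffAt.hasStrictFDerivAt (by norm_num)
  have hΦ := fun a x => auxG_hasFDerivAt hm ιY Ψ e yδ hB1 hB3 a x
  have hsecond : fderiv ℝ (fderiv ℝ (fun p : Y × U => Jr ιY Ψ αstar yδ p + lam (e p)))
      (ystar, ustar) = (fderiv ℝ (auxG ιY Ψ e yδ) ((αstar, lam), (ystar, ustar))).comp
        (ContinuousLinearMap.inr ℝ ((Fin r → ℝ) × (Z →L[ℝ] ℝ)) (Y × U)) := by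
    have : fderiv ℝ (fun p : Y × U => Jr ιY Ψ αstar yδ p + lam (e p))
        = fun x => auxG ιY Ψ e yδ ((αstar, lam), x) := by
      funext x
      exact (hΦ (αstar, lam) x).fderiv
    rw [this]
    exact (hG.hasFDerivAt.comp (ystar, ustar) (hasFDerivAt_prodMk_right _ _)).fderiv
  obtain ⟨ρ, hρ, huq⟩ := aux_unique
    (fun (a : (Fin r → ℝ) × (Z →L[ℝ] ℝ)) (p : Y × U) => Jr ιY Ψ a.1 yδ p + a.2 (e p))
    (auxG ιY Ψ e yδ) _ hΦ (αstar, lam) (ystar, ustar) hG e A he R hR η hη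
    (fun δ hδ => by
      have := hH δ hδ
      rw [hsecond] at this
      exact this)
  -- solutions for nearby parameters are close
  have hnear : ∃ κ > 0, ∀ α : Fin r → ℝ, (∀ i, αlo i ≤ α i ∧ α i ≤ αhi i) →
      dist α αstar < κ → ∃ q ∈ Metric.ball ((ystar, ustar) : Y × U) ρ,
        e q = 0 ∧ ∀ q' : Y × U, e q' = 0 → Jr ιY Ψ α yδ q ≤ Jr ιY Ψ α yδ q' := by
    by_contra hcon
    push Not at hcon
    have hc : ∀ n : ℕ, ∃ α : Fin r → ℝ, (∀ i, αlo i ≤ α i ∧ α i ≤ αhi i) ∧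
        dist α αstar < 1 / ((n : ℝ) + 1) ∧ ∀ q ∈ Metric.ball ((ystar, ustar) : Y × U) ρ,
        ¬ (e q = 0 ∧ ∀ q' : Y × U, e q' = 0 → Jr ιY Ψ α yδ q ≤ Jr ιY Ψ α yδ q') := by
      intro n
      obtain ⟨α, h1, h2, h3⟩ := hcon (1 / ((n : ℝ) + 1)) (by positivity)
      refine ⟨α, h1, h2, fun q hq hq2 => ?_⟩
      obtain ⟨q', h4, h5⟩ := h3 q hq hq2.1
      exact absurd (hq2.2 q' h4) (not_le.mpr h5)
    choose αs hadm hdist hno using hc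
    choose ps hps using fun n => hsolvable (αs n) (hadm n)
    have htend : Tendsto αs atTop (𝓝 αstar) := by
      rw [tendsto_iff_dist_tendsto_zero]
      exact squeeze_zero (fun _ => dist_nonneg) (fun n => (hdist n).le)
        tendsto_one_div_add_atTop_nhds_zero_nat
    obtain ⟨⟨p, hp⟩, hall⟩ := hstable αs hadm (tendsto_pi_nhds.mp htend)
      (fun n => (ps n).1) (fun n => (ps n).2) hps
    have hpeq := huniq p (hall p hp)
    rw [hpeq] at hp
    obtain ⟨n, hn⟩ := (hp.frequently (Metric.ball_mem_nhds _ hρ)).exists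
    exact hno n _ hn (hps n)
  obtain ⟨κ, hκ, hnear⟩ := hnear
  refine ⟨Metric.ball (αstar, ystar, ustar, lam) (min κ ρ),
    Metric.ball_mem_nhds _ (lt_min hκ hρ), ?_⟩
  rintro ⟨α, y, u, l⟩ ht hα hK
  simp only at hα hK ⊢
  simp only [Metric.mem_ball, Prod.dist_eq, max_lt_iff, lt_min_iff] at ht
  obtain ⟨⟨hd1, -⟩, hd1', hd2, hd3, hd4⟩ := ht
  obtain ⟨q, hq, hqs⟩ := hnear α hα hd1
  have hG0 : auxG ιY Ψ e yδ ((α, l), (y, u)) = 0 := by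
    obtain ⟨k1, k2, -⟩ := hK
    ext v
    · simpa [auxG, inner_sub_left, inner_smul_left, sum_inner] using k1 v
    · simpa [auxG] using k2 v
  have hqe := huq (α, l) (by simp [Prod.dist_eq, hd1', hd4]) (y, u)
    (by simp [Prod.dist_eq, hd2, hd3]) q hq hK.2.2 hqs.1 hG0
    (by
      have := hqs.2 (y, u) hK.2.2
      simpa [hK.2.2, hqs.1] using this)
  have := hLPopt α hα q hqs
  rw [hqe] at this
  exact this
end

section
/- Optimality conditions for the learning problem with linear state equation (Proposition 6.2): Assume (L1) and (L2), and let (α*, A⁻¹Bu*, u*) be a solution of (LP_lin). Then there exists q* ∈ U such that: (i) Σ_{i=1}^r ⟨K_i u*, K_i q*⟩_{E_i} (α_i − α*_i) ≥ 0 for all α ∈ [α̲,ᾱ]; (ii) for all v ∈ U: ⟨u* − u†, v⟩_Ũ + ⟨A⁻¹B q*, A⁻¹B v⟩_Ỹ + Σ_{i=1}^r α*_i ⟨K_i q*, K_i v⟩_{E_i} = 0; (iii) for all v ∈ U: (1/m) Σ_{j=1}^m ⟨A⁻¹B u* − y_δ,j, A⁻¹B v⟩_Ỹ + Σ_{i=1}^r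 α*_i ⟨K_i u*, K_i v⟩_{E_i} = 0. -/
open Filter Topology
open scoped RealInnerProductSpace

/-- The Tikhonov functional of the lower level problem of `(LP_lin)`, with penalties
`Ψᵢ(u) = ½‖Kᵢu‖²`. -/
noncomputable def Jlin {Y U Ytil : Type*} [NormedAddCommGroup Y] [NormedSpace ℝ Y]
    [NormedAddCommGroup U] [NormedSpace ℝ U]
    [NormedAddCommGroup Ytil] [InnerProductSpace ℝ Ytil]
    {m r : ℕ} {E : Fin r → Type*} [∀ i, NormedAddCommGroup (E i)]
    [∀ i, InnerProductSpace ℝ (E i)]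
    (ιY : Y →L[ℝ] Ytil) (K : (i : Fin r) → U →L[ℝ] E i)
    (α : Fin r → ℝ) (yδ : Fin m → Ytil) (p : Y × U) : ℝ :=
  (1 / (2 * (m : ℝ))) * ∑ j, ‖ιY p.1 - yδ j‖ ^ 2 + ∑ i, (α i / 2) * ‖K i p.2‖ ^ 2

/-- `p = (y,u)` solves the lower level problem of `(LP_lin)` with the linear state
equation `Ay = Bu`. -/
def SolvesLin {Y U Ytil Z : Type*} [NormedAddCommGroup Y] [NormedSpace ℝ Y]
    [NormedAddCommGroup U] [NormedSpace ℝ U]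
    [NormedAddCommGroup Ytil] [InnerProductSpace ℝ Ytil]
    [NormedAddCommGroup Z] [NormedSpace ℝ Z]
    {m r : ℕ} {E : Fin r → Type*} [∀ i, NormedAddCommGroup (E i)]
    [∀ i, InnerProductSpace ℝ (E i)]
    (A : Y →L[ℝ] Z) (B : U →L[ℝ] Z)
    (ιY : Y →L[ℝ] Ytil) (K : (i : Fin r) → U →L[ℝ] E i)
    (α : Fin r → ℝ) (yδ : Fin m → Ytil) (p : Y × U) : Prop :=
  A p.1 = B p.2 ∧ ∀ q : Y × U, A q.1 = B q.2 → Jlin ιY K α yδ p ≤ Jlin ιY K α yδ q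

variable {Y U Util Ytil Z : Type*}
  [NormedAddCommGroup Y] [NormedSpace ℝ Y] [CompleteSpace Y]
  [NormedAddCommGroup U] [NormedSpace ℝ U] [CompleteSpace U]
  [NormedAddCommGroup Util] [InnerProductSpace ℝ Util] [CompleteSpace Util]
  [NormedAddCommGroup Ytil] [InnerProductSpace ℝ Ytil] [CompleteSpace Ytil]
  [NormedAddCommGroup Z] [NormedSpace ℝ Z] [CompleteSpace Z]

section Helpers

theorem aux_riesz {U H : Type*} [NormedAddCommGroup U] [NormedSpace ℝ U] [CompleteSpace U]
    [NormedAddCommGroup H] [InnerProductSpace ℝ H] [CompleteSpace H]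
    (T : U →L[ℝ] H) (c : ℝ) (hc : 0 < c) (hT : ∀ u, c * ‖u‖ ^ 2 ≤ ‖T u‖ ^ 2) (f : U →L[ℝ] ℝ) :
    ∃ w : U, ∀ v : U, ⟪T w, T v⟫ = f v := by
  have hanti : AntilipschitzWith (Real.toNNReal (Real.sqrt c)⁻¹) T := by
    apply AddMonoidHomClass.antilipschitz_of_bound
    intro x
    have h1 : Real.sqrt c * ‖x‖ ≤ ‖T x‖ := by
      apply (fun h1 h2 => abs_le_of_sq_le_sq' h1 h2 |>.2) ?_ (norm_nonneg _)
      rw [mul_pow, Real.sq_sqrt hc.le]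
      exact hT x
    have hs : 0 < Real.sqrt c := Real.sqrt_pos.2 hc
    rw [Real.coe_toNNReal _ (by positivity), inv_mul_eq_div, le_div_iff₀ hs]
    linarith
  have hcl : IsClosed (Set.range T) := hanti.isClosed_range T.uniformContinuous
  let e := T.equivRange hanti.injective hcl
  have : CompleteSpace T.range := by
    apply IsComplete.completeSpace_coe (s := (T.range : Set H))
    exact hcl.isComplete
  let g : T.range →L[ℝ] ℝ := f.comp (e.symm : T.range →L[ℝ] U)
  let w' := (InnerProductSpace.toDual ℝ T.range).symm g
  refine ⟨e.symm w', fun v => ?_⟩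
  have h1 : ⟪w', e v⟫ = g (e v) := InnerProductSpace.toDual_symm_apply
  have h2 : g (e v) = f v := by simp [g]
  have h3 : T (e.symm w') = (w' : H) := by
    have : ((e (e.symm w') : T.range) : H) = w' := by rw [e.apply_symm_apply]
    exact this
  rw [h3, ← h2, ← h1]
  rfl

variable {U G : Type*} [NormedAddCommGroup U] [NormedSpace ℝ U]
  [NormedAddCommGroup G] [InnerProductSpace ℝ G]
  {r : ℕ} {E : Fin r → Type*} [∀ i, NormedAddCommGroup (E i)]
  [∀ i, InnerProductSpace ℝ (E i)]

theorem aux_laxMilgram [CompleteSpace U] [CompleteSpace G] [∀ i, CompleteSpace (E i)]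
    (S : U →L[ℝ] G) (K : (i : Fin r) → U →L[ℝ] E i)
    (α : Fin r → ℝ) (hα : ∀ i, 0 ≤ α i) (c : ℝ) (hc : 0 < c)
    (h : ∀ u, c * ‖u‖ ^ 2 ≤ ‖S u‖ ^ 2 + ∑ i, α i * ‖K i u‖ ^ 2) (f : U →L[ℝ] ℝ) :
    ∃ w : U, ∀ v : U, ⟪S w, S v⟫ + ∑ i, α i * ⟪K i w, K i v⟫ = f v := by
  let P : U →L[ℝ] PiLp 2 E := ((PiLp.continuousLinearEquiv 2 ℝ E).symm : _ →L[ℝ] PiLp 2 E).comp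
    (ContinuousLinearMap.pi fun i => Real.sqrt (α i) • K i)
  let T : U →L[ℝ] WithLp 2 (G × PiLp 2 E) :=
    ((WithLp.prodContinuousLinearEquiv 2 ℝ G (PiLp 2 E)).symm : _ →L[ℝ] _).comp (S.prod P)
  have hin : ∀ w v, ⟪T w, T v⟫ = ⟪S w, S v⟫ + ∑ i, α i * ⟪K i w, K i v⟫ := by
    intro w v
    have h1 : ⟪T w, T v⟫ = ⟪S w, S v⟫ + ⟪P w, P v⟫ := rfl
    have h2 : ⟪P w, P v⟫ = ∑ i, ⟪Real.sqrt (α i) • K i w, Real.sqrt (α i) • K i v⟫ := by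
      rw [PiLp.inner_apply]; rfl
    rw [h1, h2]
    congr 1
    refine Finset.sum_congr rfl fun i _ => ?_
    rw [real_inner_smul_left, real_inner_smul_right, ← mul_assoc, Real.mul_self_sqrt (hα i)]
  obtain ⟨w, hw⟩ := aux_riesz T c hc (fun u => by
    rw [← real_inner_self_eq_norm_sq (T u), hin]
    simpa [real_inner_self_eq_norm_sq] using h u) f
  exact ⟨w, fun v => by rw [← hin, hw]⟩

theorem aux_expand {m : ℕ} (hm : 0 < m) (S : U →L[ℝ] G) (K : (i : Fin r) → U →L[ℝ] E i)
    (α : Fin r → ℝ) (yδ : Fin m → G) (u h : U) :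
    (1 / (2 * (m : ℝ))) * ∑ j, ‖S (u + h) - yδ j‖ ^ 2 + ∑ i, (α i / 2) * ‖K i (u + h)‖ ^ 2
    = (1 / (2 * (m : ℝ))) * ∑ j, ‖S u - yδ j‖ ^ 2 + ∑ i, (α i / 2) * ‖K i u‖ ^ 2
      + ((1 / (m : ℝ)) * ∑ j, ⟪S u - yδ j, S h⟫ + ∑ i, α i * ⟪K i u, K i h⟫)
      + (1 / 2) * (‖S h‖ ^ 2 + ∑ i, α i * ‖K i h‖ ^ 2) := by
  have hm' : (m : ℝ) ≠ 0 := by positivity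
  have h1 : ∑ j, ‖S (u + h) - yδ j‖ ^ 2
      = ∑ j, ‖S u - yδ j‖ ^ 2 + 2 * ∑ j, ⟪S u - yδ j, S h⟫ + m * ‖S h‖ ^ 2 := by
    have : ∀ j, ‖S (u + h) - yδ j‖ ^ 2
        = ‖S u - yδ j‖ ^ 2 + 2 * ⟪S u - yδ j, S h⟫ + ‖S h‖ ^ 2 := by
      intro j
      rw [← norm_add_sq_real, map_add]
      congr 2
      abel
    simp only [this, Finset.sum_add_distrib, Finset.mul_sum]
    simp
  have h2 : ∑ i, (α i / 2) * ‖K i (u + h)‖ ^ 2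
      = ∑ i, (α i / 2) * ‖K i u‖ ^ 2 + ∑ i, α i * ⟪K i u, K i h⟫
        + (1 / 2) * ∑ i, α i * ‖K i h‖ ^ 2 := by
    rw [Finset.mul_sum, ← Finset.sum_add_distrib, ← Finset.sum_add_distrib]
    refine Finset.sum_congr rfl fun i _ => ?_
    rw [map_add, norm_add_sq_real]
    ring
  rw [h1, h2]
  field_simp
  ring

theorem aux_quad (a b : ℝ) (h : ∀ t : ℝ, 0 < t → t ≤ 1 → 0 ≤ t * a + t ^ 2 * b) : 0 ≤ a := by
  by_contra! ha
  have hb : 0 < |b| + 1 - a := by linarith [abs_nonneg b]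
  have hden : 0 < |b| + 1 - a := hb
  let t := (-a) / (|b| + 1 - a)
  have ht : 0 < t := div_pos (by linarith) hden
  have ht1 : t ≤ 1 := by
    rw [div_le_one hden]
    linarith [abs_nonneg b]
  have htm : t * (|b| + 1 - a) = -a := div_mul_cancel₀ _ hden.ne'
  have h0 := h t ht ht1
  have h1 : 0 ≤ a + t * b := by
    have : 0 ≤ t * (a + t * b) := by nlinarith
    exact nonneg_of_mul_nonneg_right this ht
  have h2 : t * b ≤ t * |b| := mul_le_mul_of_nonneg_left (le_abs_self b) ht.le
  nlinarith

end Helpers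

/-- **Proposition 6.2** (optimality conditions for the learning problem with linear
state equation): under (L1) and (L2), every solution `(α*, A⁻¹Bu*, u*)` of `(LP_lin)`
admits an adjoint state `q* ∈ U` satisfying the optimality system (i)–(iii). -/
theorem linear_learning_problem_optimality_conditions
    (hYrefl : Function.Surjective (NormedSpace.inclusionInDoubleDual ℝ Y))
    (hUrefl : Function.Surjective (NormedSpace.inclusionInDoubleDual ℝ U))
    {m r : ℕ} (hm : 0 < m) (hr : 0 < r)
    {E : Fin r → Type*} [∀ i, NormedAddCommGroup (E i)]
    [∀ i, InnerProductSpace ℝ (E i)] [∀ i, CompleteSpace (E i)]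
    (ιY : Y →L[ℝ] Ytil) (hιY : Function.Injective ιY)
    (ιU : U →L[ℝ] Util) (hιU : Function.Injective ιU)
    (A : Y →L[ℝ] Z) (B : U →L[ℝ] Z) (K : (i : Fin r) → U →L[ℝ] E i)
    (udag : Util) (yδ : Fin m → Ytil)
    (αlo αhi : Fin r → ℝ) (hαpos : ∀ i, 0 < αlo i) (hαle : ∀ i, αlo i ≤ αhi i)
    (hL1 : Function.Bijective A)
    (hL2 : ∃ ζ > (0 : ℝ), ∀ u : U, ζ * ‖u‖ ^ 2 ≤ ∑ i, ‖K i u‖ ^ 2)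
    (αstar : Fin r → ℝ) (ustar : U)
    -- `(α*, A⁻¹Bu*, u*)` is a solution of the learning problem `(LP_lin)`:
    (hαstar : ∀ i, αlo i ≤ αstar i ∧ αstar i ≤ αhi i)
    (hsol : SolvesLin A B ιY K αstar yδ ((Equiv.ofBijective A hL1).symm (B ustar), ustar))
    (hLPopt : ∀ α : Fin r → ℝ, (∀ i, αlo i ≤ α i ∧ α i ≤ αhi i) →
      ∀ q : Y × U, SolvesLin A B ιY K α yδ q →
        ‖ιU ustar - udag‖ ^ 2 ≤ ‖ιU q.2 - udag‖ ^ 2) :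
    ∃ qstar : U,
      -- (i) variational inequality for the parameters
      (∀ α : Fin r → ℝ, (∀ i, αlo i ≤ α i ∧ α i ≤ αhi i) →
        0 ≤ ∑ i, ⟪K i ustar, K i qstar⟫ * (α i - αstar i)) ∧
      -- (ii) adjoint equation of the learning problem
      (∀ v : U, ⟪ιU ustar - udag, ιU v⟫
          + ⟪ιY ((Equiv.ofBijective A hL1).symm (B qstar)),
              ιY ((Equiv.ofBijective A hL1).symm (B v))⟫
          + ∑ i, αstar i * ⟪K i qstar, K i v⟫ = 0) ∧
      -- (iii) optimality condition of the reduced lower level problem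
      (∀ v : U, (1 / (m : ℝ)) *
            ∑ j, ⟪ιY ((Equiv.ofBijective A hL1).symm (B ustar)) - yδ j,
              ιY ((Equiv.ofBijective A hL1).symm (B v))⟫
          + ∑ i, αstar i * ⟪K i ustar, K i v⟫ = 0) := by
  classical
  obtain ⟨ζ, hζ, hL2⟩ := hL2
  -- reduced operator
  let Ae : Y ≃L[ℝ] Z := ContinuousLinearEquiv.ofBijective A
    (LinearMap.ker_eq_bot.2 hL1.1) (LinearMap.range_eq_top.2 hL1.2)
  have hAe : ∀ z, (Equiv.ofBijective A hL1).symm z = Ae.symm z := by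
    intro z
    rw [Equiv.symm_apply_eq]
    exact (Ae.apply_symm_apply z).symm
  let S : U →L[ℝ] Ytil := ιY.comp ((Ae.symm : Z →L[ℝ] Y).comp B)
  have hS : ∀ v, ιY ((Equiv.ofBijective A hL1).symm (B v)) = S v := by
    intro v
    rw [hAe]; rfl
  have hAS : ∀ v, A ((Equiv.ofBijective A hL1).symm (B v)) = B v :=
    fun v => (Equiv.ofBijective A hL1).apply_symm_apply (B v)
  simp only [hS]
  -- uniform coercivity
  have : Nonempty (Fin r) := ⟨⟨0, hr⟩⟩
  obtain ⟨i₀, hi₀⟩ := Finite.exists_min αlo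
  set c : ℝ := αlo i₀ * ζ with hcdef
  have hc : 0 < c := mul_pos (hαpos i₀) hζ
  have hcoer : ∀ α : Fin r → ℝ, (∀ i, αlo i ≤ α i) → ∀ u : U,
      c * ‖u‖ ^ 2 ≤ ‖S u‖ ^ 2 + ∑ i, α i * ‖K i u‖ ^ 2 := by
    intro α hα u
    have h1 : αlo i₀ * ∑ i, ‖K i u‖ ^ 2 ≤ ∑ i, α i * ‖K i u‖ ^ 2 := by
      rw [Finset.mul_sum]
      refine Finset.sum_le_sum fun i _ => ?_
      exact mul_le_mul_of_nonneg_right ((hi₀ i).trans (hα i)) (sq_nonneg _)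
    have h2 := mul_le_mul_of_nonneg_left (hL2 u) (hαpos i₀).le
    have h3 := sq_nonneg ‖S u‖
    rw [hcdef, mul_assoc]
    linarith
  have hLM : ∀ α : Fin r → ℝ, (∀ i, αlo i ≤ α i) → ∀ f : U →L[ℝ] ℝ,
      ∃ w : U, ∀ v : U, ⟪S w, S v⟫ + ∑ i, α i * ⟪K i w, K i v⟫ = f v := fun α hα f =>
    aux_laxMilgram S K α (fun i => (hαpos i).le.trans (hα i)) c hc (hcoer α hα) f
  have hJ : ∀ (α : Fin r → ℝ) (u : U),
      Jlin ιY K α yδ ((Equiv.ofBijective A hL1).symm (B u), u)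
      = (1 / (2 * (m : ℝ))) * ∑ j, ‖S u - yδ j‖ ^ 2 + ∑ i, (α i / 2) * ‖K i u‖ ^ 2 := by
    intro α u
    simp only [Jlin, hS]
  have hm' : (m : ℝ) ≠ 0 := by positivity
  -- (iii)
  have hiii : ∀ v : U, (1 / (m : ℝ)) * ∑ j, ⟪S ustar - yδ j, S v⟫
      + ∑ i, αstar i * ⟪K i ustar, K i v⟫ = 0 := by
    have hge : ∀ v : U, 0 ≤ (1 / (m : ℝ)) * ∑ j, ⟪S ustar - yδ j, S v⟫
        + ∑ i, αstar i * ⟪K i ustar, K i v⟫ := by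
      intro v
      apply aux_quad _ ((1 / 2) * (‖S v‖ ^ 2 + ∑ i, αstar i * ‖K i v‖ ^ 2))
      intro t ht _
      have h1 := hsol.2 ((Equiv.ofBijective A hL1).symm (B (ustar + t • v)), ustar + t • v)
        (hAS _)
      rw [hJ, hJ, aux_expand hm] at h1
      have e1 : ∑ j, ⟪S ustar - yδ j, S (t • v)⟫ = t * ∑ j, ⟪S ustar - yδ j, S v⟫ := by
        rw [Finset.mul_sum]
        refine Finset.sum_congr rfl fun j _ => ?_
        rw [map_smul, real_inner_smul_right]
      have e2 : ∑ i, αstar i * ⟪K i ustar, K i (t • v)⟫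
          = t * ∑ i, αstar i * ⟪K i ustar, K i v⟫ := by
        rw [Finset.mul_sum]
        refine Finset.sum_congr rfl fun j _ => ?_
        rw [map_smul, real_inner_smul_right]
        ring
      have e3 : ‖S (t • v)‖ ^ 2 = t ^ 2 * ‖S v‖ ^ 2 := by
        rw [map_smul, norm_smul, mul_pow, Real.norm_eq_abs, sq_abs]
      have e4 : ∑ i, αstar i * ‖K i (t • v)‖ ^ 2 = t ^ 2 * ∑ i, αstar i * ‖K i v‖ ^ 2 := by
        rw [Finset.mul_sum]
        refine Finset.sum_congr rfl fun j _ => ?_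
        rw [map_smul, norm_smul, mul_pow, Real.norm_eq_abs, sq_abs]
        ring
      rw [e1, e2, e3, e4] at h1
      linarith
    intro v
    have h1 := hge v
    have h2 := hge (-v)
    simp only [map_neg, inner_neg_right, mul_neg, Finset.sum_neg_distrib] at h2
    linarith
  -- adjoint state
  obtain ⟨q, hq⟩ := hLM αstar (fun i => (hαstar i).1)
    (-((innerSL ℝ (ιU ustar - udag)).comp ιU))
  have hq' : ∀ v : U, ⟪S q, S v⟫ + ∑ i, αstar i * ⟪K i q, K i v⟫
      = -⟪ιU ustar - udag, ιU v⟫ := by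
    intro v
    rw [hq v]
    rfl
  refine ⟨q, ?_, fun v => by linarith [hq' v], hiii⟩
  intro α hα
  let d : Fin r → ℝ := fun i => α i - αstar i
  let Gf : U → (U →L[ℝ] ℝ) := fun p => ∑ i, d i • (innerSL ℝ (K i p)).comp (K i)
  have hGf : ∀ p v, Gf p v = ∑ i, d i * ⟪K i p, K i v⟫ := by
    intro p v
    simp [Gf]
  have hgoal : ∑ i, ⟪K i ustar, K i q⟫ * (α i - αstar i) = Gf q ustar := by
    rw [hGf]
    refine Finset.sum_congr rfl fun i _ => ?_
    rw [real_inner_comm, mul_comm]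
  rw [hgoal]
  let C : ℝ := ‖Gf ustar‖ / c
  have hC : 0 ≤ C := by positivity
  have key : 0 ≤ 2 * Gf q ustar := by
    apply aux_quad _ (2 * (‖Gf q‖ * C) + (‖ιU‖ * C) ^ 2)
    intro t ht ht1
    let αt : Fin r → ℝ := fun i => αstar i + t * d i
    have hαt : ∀ i, αlo i ≤ αt i ∧ αt i ≤ αhi i := by
      intro i
      have h1 := hαstar i
      have h2 := hα i
      have : αt i = (1 - t) * αstar i + t * α i := by simp only [αt, d]; ring
      rw [this]
      constructor <;> nlinarith
    obtain ⟨ut, hut⟩ := hLM αt (fun i => (hαt i).1)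
      ((1 / (m : ℝ)) • ∑ j, (innerSL ℝ (yδ j)).comp S)
    have hut' : ∀ v, ⟪S ut, S v⟫ + ∑ i, αt i * ⟪K i ut, K i v⟫
        = (1 / (m : ℝ)) * ∑ j, ⟪yδ j, S v⟫ := by
      intro v
      rw [hut v]
      simp
    have hsum : ∀ p v, (1 / (m : ℝ)) * ∑ j, ⟪S p - yδ j, S v⟫
        = ⟪S p, S v⟫ - (1 / (m : ℝ)) * ∑ j, ⟪yδ j, S v⟫ := by
      intro p v
      simp only [inner_sub_left, Finset.sum_sub_distrib]
      simp only [Finset.sum_const, Finset.card_univ, Fintype.card_fin, nsmul_eq_mul]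
      field_simp
    -- `ut` solves the lower level problem
    have hsolt : SolvesLin A B ιY K αt yδ ((Equiv.ofBijective A hL1).symm (B ut), ut) := by
      refine ⟨hAS _, ?_⟩
      rintro ⟨y, u⟩ hyu
      have hy : y = (Equiv.ofBijective A hL1).symm (B u) := by
        rw [Equiv.eq_symm_apply]
        exact hyu
      subst hy
      rw [hJ, hJ]
      have hx := aux_expand hm S K αt yδ ut (u - ut)
      rw [add_sub_cancel] at hx
      rw [hx, hsum]
      have h1 := hut' (u - ut)
      have h2 := hcoer αt (fun i => (hαt i).1) (u - ut)
      have h3 : 0 ≤ c * ‖u - ut‖ ^ 2 := by positivity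
      linarith
    have hopt := hLPopt αt hαt _ hsolt
    simp only at hopt
    let h : U := ut - ustar
    have hh : ut = ustar + h := by simp [h]
    -- equations for `h`
    have hs3 : ∀ v, ⟪S ustar, S v⟫ + ∑ i, αstar i * ⟪K i ustar, K i v⟫
        = (1 / (m : ℝ)) * ∑ j, ⟪yδ j, S v⟫ := by
      intro v
      have := hiii v
      rw [hsum] at this
      linarith
    have hdiff : ∀ v, ⟪S h, S v⟫ + ∑ i, αstar i * ⟪K i h, K i v⟫
        + t * ∑ i, d i * ⟪K i h, K i v⟫ = - (t * Gf ustar v) := by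
      intro v
      have h1 := hut' v
      rw [← hs3 v, hh] at h1
      have e : ∑ i, αt i * ⟪K i (ustar + h), K i v⟫
          = ∑ i, αstar i * ⟪K i ustar, K i v⟫ + ∑ i, αstar i * ⟪K i h, K i v⟫
            + t * ∑ i, d i * ⟪K i h, K i v⟫ + t * ∑ i, d i * ⟪K i ustar, K i v⟫ := by
        simp only [Finset.mul_sum, ← Finset.sum_add_distrib]
        refine Finset.sum_congr rfl fun i _ => ?_
        simp only [map_add, inner_add_left, αt]
        ring
      rw [e, map_add, inner_add_left] at h1
      rw [hGf]
      linarith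
    -- bound on `h`
    have hbd : ‖h‖ ≤ t * C := by
      have h1 := hdiff h
      have h2 := hcoer αt (fun i => (hαt i).1) h
      have e : ∑ i, αt i * ‖K i h‖ ^ 2 = ∑ i, αstar i * ⟪K i h, K i h⟫
          + t * ∑ i, d i * ⟪K i h, K i h⟫ := by
        simp only [Finset.mul_sum, ← Finset.sum_add_distrib]
        refine Finset.sum_congr rfl fun i _ => ?_
        simp only [real_inner_self_eq_norm_sq, αt]
        ring
      rw [real_inner_self_eq_norm_sq] at h1
      have h3 : -(Gf ustar h) ≤ ‖Gf ustar‖ * ‖h‖ :=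
        (neg_le_abs _).trans ((Gf ustar).le_opNorm h)
      have h4 : c * ‖h‖ ^ 2 ≤ t * (‖Gf ustar‖ * ‖h‖) := by
        have := mul_le_mul_of_nonneg_left h3 ht.le
        linarith
      rcases (norm_nonneg h).eq_or_lt with h0 | h0
      · rw [← h0]; positivity
      · have h5 : c * ‖h‖ ≤ t * ‖Gf ustar‖ := by
          have : (c * ‖h‖) * ‖h‖ ≤ (t * ‖Gf ustar‖) * ‖h‖ := by linarith
          exact le_of_mul_le_mul_right this h0
        have : t * C = (t * ‖Gf ustar‖) / c := by simp only [C]; ring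
        rw [this, le_div_iff₀ hc]
        linarith
    -- combine
    have hexp : ‖ιU ut - udag‖ ^ 2
        = ‖ιU ustar - udag‖ ^ 2 + 2 * ⟪ιU ustar - udag, ιU h⟫ + ‖ιU h‖ ^ 2 := by
      rw [← norm_add_sq_real, hh, map_add]
      congr 2
      abel
    have hadj : ⟪ιU ustar - udag, ιU h⟫ = t * (Gf q ustar + Gf q h) := by
      have h1 := hq' h
      have h2 := hdiff q
      have e1 : ⟪S q, S h⟫ = ⟪S h, S q⟫ := real_inner_comm _ _
      have e2 : ∑ i, αstar i * ⟪K i q, K i h⟫ = ∑ i, αstar i * ⟪K i h, K i q⟫ :=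
        Finset.sum_congr rfl fun i _ => by rw [real_inner_comm]
      have e3 : Gf q h = ∑ i, d i * ⟪K i h, K i q⟫ := by
        rw [hGf]
        exact Finset.sum_congr rfl fun i _ => by rw [real_inner_comm]
      have e4 : Gf q ustar = Gf ustar q := by
        rw [hGf, hGf]
        exact Finset.sum_congr rfl fun i _ => by rw [real_inner_comm]
      rw [e3, e4]
      linarith
    have hb1 : Gf q h ≤ ‖Gf q‖ * (t * C) :=
      (le_abs_self _).trans (((Gf q).le_opNorm h).trans
        (mul_le_mul_of_nonneg_left hbd (norm_nonneg _)))
    have hb2 : ‖ιU h‖ ^ 2 ≤ (‖ιU‖ * (t * C)) ^ 2 := by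
      gcongr
      exact (ιU.le_opNorm h).trans (mul_le_mul_of_nonneg_left hbd (norm_nonneg _))
    have hb3 := mul_le_mul_of_nonneg_left hb1 ht.le
    rw [hexp, hadj] at hopt
    have e5 : (‖ιU‖ * (t * C)) ^ 2 = t ^ 2 * (‖ιU‖ * C) ^ 2 := by ring
    rw [e5] at hb2
    linarith
  linarith
end
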